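/- arXiv:2106.08099 — 2 statements merged into one kernel-verified Lean document; each statement's English description precedes it below -/
import Mathlib

section
/- Let 𝔥 : ℝ² → ℝ be nonnegative, convex and positively 1-homogeneous, and let τ₁, τ₂ : [0,1] → ℝ² be injective Lipschitz paths such that τ₁(0) = τ₂(1) = P, τ₁(1) = τ₂(0) = Q with P ≠ Q, and such that τ₁ and τ₂ have no intersection except the points P and Q (i.e., τ₁(s) = τ₂(t) implies (s,t) = (0,1) or (s,t) = (1,0)). Let R denote the closed region enclosed by τ₁ ∪ τ₂, namely the complement in ℝ² of the unbounded connected component of ℝ² \ (τ₁([0,1]) ∪ τ₂([0,1])). Then there exists an injective Lipschitz path τ : [0,1] → ℝ² with τ(0) = P, τ(1) = Q, entirely contained in R, such that, setting τ̂(t) = τ(1−t), one has len(τ) + len(τ̂) ≤ len(τ₁) + len(τ₂). -/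
/-!
In a compact plane region without holes a curve that is shortest for the Euclidean length is at once
shortest for every sublinear integrand. Hence the Euclidean shortest curve `τ` from `P` to `Q` in
the enclosed region has `len τ ≤ len τ₁` and, applying this to `v ↦ 𝔥 (-v)`, also
`len τ̂ ≤ len τ₂`.

For a strictly convex gauge, a shortest curve containing both endpoints of a segment of the region
contains that segment. Were the shortest curves for two gauges different, arcs of them with common
endpoints would enclose a bounded component of their complement, which has an open chord with both
endpoints on the same arc: a short chord near a point of its closure farthest from a suitable
centre. This is absurd, so the two curves have the same image and each is a reparametrization of the
other. A nonnegative sublinear `h` is the limit of the strictly convex gauges `h + ε * ‖·‖`, and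
subtracting a linear function below `h`, which changes all lengths by the same constant, reduces
every `h` to this case.
-/

open Set Metric Bornology MeasureTheory

open scoped NNReal Topology RealInnerProductSpace

section Logarithms

open scoped unitInterval

lemma eq_of_exp_eq_of_isPreconnected {X : Type*} [TopologicalSpace X] {S : Set X}
    (hS : IsPreconnected S) {f : X → ℂ} (hf : ContinuousOn f S) {c : ℂ}
    (hc : ∀ x ∈ S, Complex.exp (f x) = c) {x y : X} (hx : x ∈ S) (hy : y ∈ S) : f x = f y :=
  Complex.isCoveringMap_exp.eqOn_of_comp_eqOn hS hf (continuousOn_const (c := f y))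
    (fun w hw => Subtype.ext ((hc w hw).trans (hc y hy).symm)) hy rfl hx

variable {a b : ℂ}

lemma exists_continuous_log_of_apply_zero_eq_one {A : Type*} [TopologicalSpace A] {H : I × A → ℂ}
    (hH : Continuous H) (hne : ∀ x, H x ≠ 0) (hone : ∀ z, H (0, z) = 1) :
    ∃ F : I × A → ℂ, Continuous F ∧ (∀ x, Complex.exp (F x) = H x) ∧ ∀ z, F (0, z) = 0 := by
  let G : C(I × A, {w : ℂ // w ≠ 0}) := ⟨fun x => ⟨H x, hne x⟩, hH.subtype_mk hne⟩
  have hG (z : A) : G (0, z) = ⟨Complex.exp 0, Complex.exp_ne_zero _⟩ :=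
    Subtype.ext (by simpa [G] using hone z)
  let F := Complex.isCoveringMap_exp.liftHomotopy G (.const A 0) hG
  refine ⟨F, F.continuous, fun x => ?_,
    Complex.isCoveringMap_exp.liftHomotopy_zero G (.const A 0) hG⟩
  exact congrArg Subtype.val
    (congrFun (Complex.isCoveringMap_exp.liftHomotopy_lifts G (.const A 0) hG) x)

lemma one_sub_div_mem_slitPlane {w z : ℂ} (h : ‖w‖ < ‖z‖) : 1 - w / z ∈ Complex.slitPlane := by
  rw [sub_eq_add_neg]
  refine Complex.mem_slitPlane_of_norm_lt_one ?_
  rw [norm_neg, norm_div]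
  exact (div_lt_one ((norm_nonneg w).trans_lt h)).2 h

lemma apply_one_eq_log_sub_log (p : Path a b) {z : ℂ} (hz : ∀ t, ‖p t‖ < ‖z‖) {f : I → ℂ}
    (hf : Continuous f) (h0 : f 0 = 0) (hexp : ∀ t, Complex.exp (f t) = (p t - z) / (a - z)) :
    f 1 = Complex.log (1 - b / z) - Complex.log (1 - a / z) := by
  have hz0 : z ≠ 0 := norm_pos_iff.1 ((norm_nonneg _).trans_lt (hz 0))
  have hslit (t : I) : 1 - p t / z ∈ Complex.slitPlane := one_sub_div_mem_slitPlane (hz t)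
  have hexp_log (t : I) : Complex.exp (Complex.log (1 - p t / z)) = (p t - z) * (-1 / z) := by
    rw [Complex.exp_log (Complex.slitPlane_ne_zero (hslit t))]
    field_simp
    ring
  have hconst (t : I) (_ : t ∈ univ) :
      Complex.exp (f t - (Complex.log (1 - p t / z) - Complex.log (1 - p 0 / z))) = 1 := by
    rw [Complex.exp_sub, Complex.exp_sub, hexp_log, hexp_log, p.source, mul_div_mul_right,
      ← hexp, div_self (Complex.exp_ne_zero _)]
    exact div_ne_zero (neg_ne_zero.2 one_ne_zero) hz0
  have hcont : Continuous fun t : I =>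
      f t - (Complex.log (1 - p t / z) - Complex.log (1 - p 0 / z)) :=
    hf.sub ((Continuous.clog (by fun_prop) hslit).sub continuous_const)
  have := eq_of_exp_eq_of_isPreconnected isPreconnected_univ hcont.continuousOn hconst
    (mem_univ 1) (mem_univ 0)
  rw [h0, sub_self, sub_zero, sub_eq_zero, p.source, p.target] at this
  exact this

/- Lifting `(t, z) ↦ (p t - z) / (a - z)` through `exp`, starting from `0`, gives at time `1` a
logarithm that is continuous in `z`. -/
lemma exists_continuousOn_log_sub_div_sub (p : Path a b) :
    ∃ L : ℂ → ℂ, ContinuousOn L (range p)ᶜ ∧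
      (∀ z ∉ range p, Complex.exp (L z) = (b - z) / (a - z)) ∧
      ∀ z, (∀ x ∈ range p, ‖x‖ < ‖z‖) →
        L z = Complex.log (1 - b / z) - Complex.log (1 - a / z) := by
  classical
  have hne (t : I) (z : ↥(range p)ᶜ) : p t - z ≠ 0 := sub_ne_zero.2 fun h => z.2 ⟨t, h⟩
  have ha (z : ↥(range p)ᶜ) : a - z ≠ 0 := by simpa only [p.source] using hne 0 z
  obtain ⟨F, hF, hexp, hzero⟩ := exists_continuous_log_of_apply_zero_eq_one
    (H := fun x : I × ↥(range p)ᶜ => (p x.1 - x.2) / (a - x.2))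
    (Continuous.div (by fun_prop) (by fun_prop) fun x => ha x.2)
    (fun x => div_ne_zero (hne x.1 x.2) (ha x.2))
    (fun z => by rw [p.source, div_self (ha z)])
  let L (z : ℂ) : ℂ := if hz : z ∈ (range p)ᶜ then F (1, ⟨z, hz⟩) else 0
  have hL {z : ℂ} (hz : z ∈ (range p)ᶜ) : L z = F (1, ⟨z, hz⟩) := dif_pos hz
  refine ⟨L, ?_, fun z hz => ?_, fun z hfar => ?_⟩
  · rw [continuousOn_iff_continuous_domRestrict]
    exact (hF.comp (Continuous.prodMk_right 1)).congr fun z => (hL z.2).symm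
  · rw [hL hz, hexp, p.target]
  · rw [hL fun h => (hfar z h).false]
    exact apply_one_eq_log_sub_log p (fun t => hfar _ ⟨t, rfl⟩)
      (hF.comp (Continuous.prodMk_left _)) (hzero _) fun t => hexp _

lemma not_exists_continuousOn_log_sub_div_sub (hab : a ≠ b) :
    ¬ ∃ L : ℂ → ℂ, ContinuousOn L {a, b}ᶜ ∧
      ∀ z ∈ ({a, b}ᶜ : Set ℂ), Complex.exp (L z) = (b - z) / (a - z) := by
  rintro ⟨L, hL, hexp⟩
  have hba : b - a ≠ 0 := sub_ne_zero.2 hab.symm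
  set r : ℝ := ‖b - a‖ / 2
  have hr : 0 < r := half_pos (norm_pos_iff.2 hba)
  have hra : ‖b - a‖ = 2 * r := by ring
  have hnorm (θ : ℝ) : ‖circleMap 0 r θ‖ = r := by simp [abs_of_pos hr]
  have hmem (θ : ℝ) : circleMap a r θ ∈ ({a, b}ᶜ : Set ℂ) := by
    rintro (h | h)
    · exact circleMap_ne_center hr.ne' h
    · have := hnorm θ
      rw [← circleMap_sub_center, mem_singleton_iff.1 h] at this
      linarith
  have hslit (θ : ℝ) : 1 - circleMap 0 r θ / (b - a) ∈ Complex.slitPlane := by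
    refine one_sub_div_mem_slitPlane ?_
    rw [hnorm]
    linarith
  have hconst (θ : ℝ) (_ : θ ∈ univ) : Complex.exp (L (circleMap a r θ) + θ * Complex.I -
      Complex.log (1 - circleMap 0 r θ / (b - a))) = -(b - a) / r := by
    have h1 := Complex.slitPlane_ne_zero (hslit θ)
    have h2 := Complex.exp_ne_zero (θ * Complex.I)
    have h3 : (r : ℂ) ≠ 0 := mod_cast hr.ne'
    rw [Complex.exp_sub, Complex.exp_add, hexp _ (hmem θ), Complex.exp_log h1,
      div_eq_iff h1]
    simp only [circleMap, zero_add] at h1 ⊢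
    field_simp
    ring
  have hcont : Continuous fun θ : ℝ => L (circleMap a r θ) + θ * Complex.I -
      Complex.log (1 - circleMap 0 r θ / (b - a)) :=
    ((hL.comp_continuous (continuous_circleMap a r) hmem).add (by fun_prop)).sub
      (Continuous.clog (by fun_prop) hslit)
  have := eq_of_exp_eq_of_isPreconnected isPreconnected_univ hcont.continuousOn hconst
    (mem_univ (2 * Real.pi)) (mem_univ 0)
  have hper (c : ℂ) : circleMap c r (2 * Real.pi) = circleMap c r 0 := by
    simpa using periodic_circleMap c r 0
  rw [hper, hper] at this
  simp at this

lemma eq_of_not_isBounded_connectedComponentIn {S T : Set ℂ} (hST : IsBounded (S ∪ T))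
    {L M : ℂ → ℂ} (hL : ContinuousOn L Sᶜ) (hM : ContinuousOn M Tᶜ)
    (hexp : ∀ z ∉ S ∪ T, Complex.exp (L z) = Complex.exp (M z))
    (hfar : ∀ z, (∀ x ∈ S ∪ T, ‖x‖ < ‖z‖) → L z = M z) {z : ℂ} (hz : z ∉ S ∪ T)
    (hunbdd : ¬ IsBounded (connectedComponentIn (S ∪ T)ᶜ z)) : L z = M z := by
  have hC : connectedComponentIn (S ∪ T)ᶜ z ⊆ (S ∪ T)ᶜ := connectedComponentIn_subset _ _
  obtain ⟨B, hB⟩ := hST.exists_norm_le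
  obtain ⟨w, hwC, hw⟩ : ∃ w ∈ connectedComponentIn (S ∪ T)ᶜ z, B < ‖w‖ := by
    by_contra! h
    exact hunbdd (isBounded_iff_forall_norm_le.2 ⟨B, h⟩)
  have hconst : ∀ x ∈ connectedComponentIn (S ∪ T)ᶜ z, Complex.exp (L x - M x) = 1 := fun x hx =>
    by rw [Complex.exp_sub, hexp x (hC hx), div_self (Complex.exp_ne_zero _)]
  have hcont := (hL.mono (hC.trans (compl_subset_compl.2 subset_union_left))).fun_sub
    (hM.mono (hC.trans (compl_subset_compl.2 subset_union_right)))
  have := eq_of_exp_eq_of_isPreconnected isPreconnected_connectedComponentIn hcont hconst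
    (mem_connectedComponentIn hz) hwC
  rwa [hfar w fun x hx => (hB x hx).trans_lt hw, sub_self, sub_eq_zero] at this

/- Eilenberg's argument: were there no bounded component, the logarithms of `(b - z) / (a - z)`
attached to `p` and to `q` would agree off both curves, since they do near infinity, and would
glue to a logarithm on the complement of `{a, b}`. -/
lemma exists_isBounded_connectedComponentIn_of_complex (hab : a ≠ b) (p q : Path a b)
    (hpq : range p ∩ range q ⊆ {a, b}) :
    ∃ z ∉ range p ∪ range q, IsBounded (connectedComponentIn (range p ∪ range q)ᶜ z) := by
  classical
  by_contra! hunbdd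
  obtain ⟨L, hL, hLexp, hLfar⟩ := exists_continuousOn_log_sub_div_sub p
  obtain ⟨M, hM, hMexp, hMfar⟩ := exists_continuousOn_log_sub_div_sub q
  have hp : IsCompact (range p) := isCompact_range p.continuous
  have hq : IsCompact (range q) := isCompact_range q.continuous
  have heq : ∀ z ∉ range p ∪ range q, L z = M z := fun z hz =>
    eq_of_not_isBounded_connectedComponentIn (hp.union hq).isBounded hL hM
      (fun z hz => (hLexp z fun h => hz (.inl h)).trans (hMexp z fun h => hz (.inr h)).symm)
      (fun z hz => (hLfar z fun x hx => hz x (.inl hx)).trans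
        (hMfar z fun x hx => hz x (.inr hx)).symm) hz (hunbdd z hz)
  have hglueL : EqOn ((range p).piecewise M L) L (range p)ᶜ := piecewise_eqOn_compl _ _ _
  have hglueM : EqOn ((range p).piecewise M L) M (range q)ᶜ := fun z hz => by
    by_cases hzp : z ∈ range p
    · exact piecewise_eq_of_mem _ _ _ hzp
    · exact (piecewise_eq_of_notMem _ _ _ hzp).trans (heq z (not_or.2 ⟨hzp, hz⟩))
  have hcover : ∀ z ∈ ({a, b}ᶜ : Set ℂ), z ∈ (range p)ᶜ ∨ z ∈ (range q)ᶜ :=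
    fun z hz => not_and_or.1 fun h => hz (hpq h)
  refine not_exists_continuousOn_log_sub_div_sub hab
    ⟨(range p).piecewise M L, fun z hz => ?_, fun z hz => ?_⟩
  · rcases hcover z hz with h | h
    · exact ((hL.congr hglueL).continuousAt
        (hp.isClosed.isOpen_compl.mem_nhds h)).continuousWithinAt
    · exact ((hM.congr hglueM).continuousAt
        (hq.isClosed.isOpen_compl.mem_nhds h)).continuousWithinAt
  · rcases hcover z hz with h | h
    · rw [hglueL h, hLexp z h]
    · rw [hglueM h, hMexp z h]

end Logarithms

theorem exists_isBounded_connectedComponentIn_of_inter_subset {E : Type*} [NormedAddCommGroup E]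
    [NormedSpace ℝ E] (hE : Module.finrank ℝ E = 2) {a b : E} (hab : a ≠ b) (p q : Path a b)
    (hpq : range p ∩ range q ⊆ {a, b}) :
    ∃ z ∉ range p ∪ range q, IsBounded (connectedComponentIn (range p ∪ range q)ᶜ z) := by
  have : FiniteDimensional ℝ E := Module.finite_of_finrank_eq_succ hE
  let e : E ≃L[ℝ] ℂ :=
    ContinuousLinearEquiv.ofFinrankEq (by rw [hE, Complex.finrank_real_complex])
  have hrange {x y : E} (r : Path x y) : range (r.map e.continuous) = e '' range r :=
    range_comp e r
  obtain ⟨z, hz, hbdd⟩ := exists_isBounded_connectedComponentIn_of_complex (e.injective.ne hab)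
    (p.map e.continuous) (q.map e.continuous) (by
      rw [hrange, hrange, ← image_inter e.injective, ← image_pair]
      exact image_mono hpq)
  obtain ⟨w, rfl⟩ := e.surjective z
  rw [hrange, hrange, ← image_union] at hz hbdd
  have hw : w ∉ range p ∪ range q := fun h => hz (mem_image_of_mem e h)
  have himage : e '' connectedComponentIn (range p ∪ range q)ᶜ w =
      connectedComponentIn (e '' (range p ∪ range q))ᶜ (e w) := by
    rw [← image_compl_eq e.bijective]
    exact e.toHomeomorph.image_connectedComponentIn hw
  refine ⟨w, hw, ?_⟩
  rw [← e.symm_image_image (connectedComponentIn _ w), himage]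
  exact e.symm.lipschitz.isBounded_image hbdd

section HoleFree

variable {X : Type*} [PseudoMetricSpace X]

/-- A set without holes: no component of its complement is bounded, so that the set contains every
bounded region cut out by any of its subsets. -/
def IsHoleFree (R : Set X) : Prop :=
  ∀ x ∉ R, ¬ IsBounded (connectedComponentIn Rᶜ x)

lemma IsHoleFree.connectedComponentIn_subset {R S : Set X} (hR : IsHoleFree R) (hSR : S ⊆ R) {z : X}
    (hz : IsBounded (connectedComponentIn Sᶜ z)) : connectedComponentIn Sᶜ z ⊆ R := by
  intro x hx
  by_contra hxR
  rw [connectedComponentIn_eq hx] at hz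
  exact hR x hxR (hz.subset (connectedComponentIn_mono x (compl_subset_compl.2 hSR)))

/-- The closed region enclosed by `S`: the set `S` together with the bounded components of its
complement. -/
def enclosedRegion (S : Set X) : Set X :=
  {x | x ∈ S ∨ IsBounded (connectedComponentIn Sᶜ x)}

lemma subset_enclosedRegion (S : Set X) : S ⊆ enclosedRegion S :=
  fun _ => Or.inl

lemma connectedComponentIn_subset_compl_enclosedRegion {S : Set X} {x : X}
    (hx : x ∉ enclosedRegion S) : connectedComponentIn Sᶜ x ⊆ (enclosedRegion S)ᶜ := by
  rintro y hy (hyS | hyb)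
  · exact connectedComponentIn_subset _ _ hy hyS
  · exact hx (.inr (connectedComponentIn_eq hy ▸ hyb))

lemma isHoleFree_enclosedRegion (S : Set X) : IsHoleFree (enclosedRegion S) := by
  intro x hx hb
  have hxS : x ∈ Sᶜ := fun h => hx (.inl h)
  exact hx (.inr (hb.subset (isPreconnected_connectedComponentIn.subset_connectedComponentIn
    (mem_connectedComponentIn hxS) (connectedComponentIn_subset_compl_enclosedRegion hx))))

lemma isClosed_enclosedRegion [LocallyConnectedSpace X] {S : Set X} (hS : IsClosed S) :
    IsClosed (enclosedRegion S) := by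
  refine isOpen_compl_iff.1 (isOpen_iff_mem_nhds.2 fun x hx => ?_)
  have hxS : x ∈ Sᶜ := fun h => hx (.inl h)
  exact Filter.mem_of_superset
    (hS.isOpen_compl.connectedComponentIn.mem_nhds (mem_connectedComponentIn hxS))
    (connectedComponentIn_subset_compl_enclosedRegion hx)

lemma isBounded_enclosedRegion {E : Type*} [NormedAddCommGroup E] [NormedSpace ℝ E] {S : Set E}
    (hS : IsBounded S) : IsBounded (enclosedRegion S) := by
  obtain ⟨B, hB0, hB⟩ := hS.exists_pos_norm_le
  refine isBounded_iff_forall_norm_le.2 ⟨B, fun x hx => ?_⟩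
  by_contra! hxB
  have hx0 : 0 < ‖x‖ := hB0.trans hxB
  have hnorm {t : ℝ} (ht : 1 ≤ t) : ‖t • x‖ = t * ‖x‖ := by
    rw [norm_smul, Real.norm_of_nonneg (by linarith)]
  have hray : (fun t : ℝ => t • x) '' Ici 1 ⊆ connectedComponentIn Sᶜ x := by
    refine (isPreconnected_Ici.image _ (by fun_prop)).subset_connectedComponentIn
      ⟨1, self_mem_Ici, one_smul ℝ x⟩ ?_
    rintro _ ⟨t, ht, rfl⟩ htS
    have := hB _ htS
    rw [hnorm ht] at this
    nlinarith [mem_Ici.1 ht]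
  rcases hx with hxS | hxb
  · exact (hB x hxS).not_gt hxB
  · obtain ⟨C, hC0, hC⟩ := hxb.exists_pos_norm_le
    have ht : 1 ≤ 1 + C / ‖x‖ := le_add_of_nonneg_right (by positivity)
    have := hC _ (hray ⟨_, ht, rfl⟩)
    rw [hnorm ht, add_mul, div_mul_cancel₀ _ hx0.ne'] at this
    linarith

end HoleFree

section Chords

lemma exists_gap {C : Set ℝ} (hC : IsClosed C) {u v x : ℝ} (hu : u ∈ C) (hv : v ∈ C)
    (hx : x ∈ Icc u v) (hxC : x ∉ C) :
    ∃ a ∈ C, ∃ b ∈ C, u ≤ a ∧ b ≤ v ∧ x ∈ Ioo a b ∧ ∀ y ∈ Ioo a b, y ∉ C := by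
  obtain ⟨a, ⟨haC, ha⟩, hamax⟩ :=
    (isCompact_Icc.inter_left hC).exists_isGreatest ⟨u, hu, left_mem_Icc.2 hx.1⟩
  obtain ⟨b, ⟨hbC, hb⟩, hbmin⟩ :=
    (isCompact_Icc.inter_left hC).exists_isLeast ⟨v, hv, right_mem_Icc.2 hx.2⟩
  refine ⟨a, haC, b, hbC, ha.1, hb.2, ⟨ha.2.lt_of_ne ?_, hb.1.lt_of_ne ?_⟩, fun y hy hyC => ?_⟩
  · exact fun h => hxC (h ▸ haC)
  · exact fun h => hxC (h ▸ hbC)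
  · rcases le_total y x with h | h
    · exact (hamax ⟨hyC, ha.1.trans hy.1.le, h⟩).not_gt hy.1
    · exact (hbmin ⟨hyC, h, hy.2.le.trans hb.2⟩).not_gt hy.2

lemma exists_openSegment_subset_of_isBounded {E : Type*} [NormedAddCommGroup E] [NormedSpace ℝ E]
    {G : Set E} (hG : IsOpen G) (hb : IsBounded G) {y d : E} (hy : y ∈ G) (hd : d ≠ 0) :
    ∃ s t : ℝ, s < t ∧ y + s • d ∉ G ∧ y + t • d ∉ G ∧
      openSegment ℝ (y + s • d) (y + t • d) ⊆ G := by
  obtain ⟨r, hr⟩ := hb.subset_ball y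
  have hr0 : 0 < r := dist_self y ▸ hr hy
  have hd0 : 0 < ‖d‖ := norm_pos_iff.2 hd
  have hfar (t : ℝ) (ht : |t| = r / ‖d‖) : y + t • d ∉ G := fun h => by
    have := hr h
    rw [mem_ball_iff_norm, add_sub_cancel_left, norm_smul, Real.norm_eq_abs, ht,
      div_mul_cancel₀ _ hd0.ne'] at this
    exact this.false
  have hpos : 0 < r / ‖d‖ := div_pos hr0 hd0
  obtain ⟨s, hs, t, ht, -, -, h0, hst⟩ := exists_gap (C := {t : ℝ | y + t • d ∉ G})
    (hG.isClosed_compl.preimage (by fun_prop))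
    (hfar (-(r / ‖d‖)) (by rw [abs_neg, abs_of_pos hpos]))
    (hfar _ (abs_of_pos hpos)) (x := 0) ⟨by linarith, hpos.le⟩ (by simpa using hy)
  refine ⟨s, t, h0.1.trans h0.2, hs, ht, ?_⟩
  rintro _ ⟨p, q, hp, hq, hpq, rfl⟩
  have hmem : p * s + q * t ∈ Ioo s t := by
    rw [← openSegment_eq_Ioo (h0.1.trans h0.2)]
    exact ⟨p, q, hp, hq, hpq, rfl⟩
  have hline : p • (y + s • d) + q • (y + t • d) = y + (p * s + q * t) • d := by
    obtain rfl : q = 1 - p := by linarith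
    module
  rw [hline]
  exact not_not.1 (hst _ hmem)

lemma interior_segment_eq_empty {E : Type*} [NormedAddCommGroup E] [NormedSpace ℝ E]
    (hE : 1 < Module.finrank ℝ E) (a b : E) :
    interior (segment ℝ a b) = ∅ := by
  have := Module.finite_of_finrank_pos (zero_lt_one.trans hE)
  by_contra! h
  rw [← convexHull_pair, interior_convexHull_nonempty_iff_affineSpan_eq_top] at h
  have := collinear_iff_finrank_le_one.1 (collinear_pair ℝ a b)
  rw [← direction_affineSpan, h, AffineSubspace.direction_top, finrank_top] at this
  exact this.not_gt hE

lemma closure_connectedComponentIn_compl_subset {X : Type*} [TopologicalSpace X]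
    [LocallyConnectedSpace X] {S : Set X} (hS : IsClosed S) (z : X) :
    closure (connectedComponentIn Sᶜ z) ⊆ connectedComponentIn Sᶜ z ∪ S := by
  intro x hx
  by_contra! h
  obtain ⟨hxG, hxS⟩ := not_or.1 h
  obtain ⟨y, hyx, hyz⟩ := mem_closure_iff.1 hx _ (hS.isOpen_compl.connectedComponentIn (x := x))
    (mem_connectedComponentIn hxS)
  rw [connectedComponentIn_eq hyz, ← connectedComponentIn_eq hyx] at hxG
  exact hxG (mem_connectedComponentIn hxS)

variable {E : Type*} [NormedAddCommGroup E] [InnerProductSpace ℝ E]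

lemma exists_forall_dist_lt_of_notMem_convex {K : Set E} (hK : IsCompact K) (hconv : Convex ℝ K)
    {g : E} (hg : g ∉ K) : ∃ c, ∀ x ∈ K, dist x c < dist g c := by
  rcases K.eq_empty_or_nonempty with rfl | hne
  · exact ⟨g, fun _ h => h.elim⟩
  obtain ⟨m, hm, hmin⟩ := exists_norm_eq_iInf_of_complete_convex hne hK.isComplete hconv g
  rw [norm_eq_iInf_iff_real_inner_le_zero hconv hm] at hmin
  obtain ⟨B, hB⟩ := hK.isBounded.subset_closedBall g
  have hw : 0 < ‖g - m‖ ^ 2 := by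
    have : g - m ≠ 0 := sub_ne_zero.2 fun h => hg (h ▸ hm)
    positivity
  set s : ℝ := (B ^ 2 + 1) / ‖g - m‖ ^ 2
  have hs : s * ‖g - m‖ ^ 2 = B ^ 2 + 1 := div_mul_cancel₀ _ hw.ne'
  refine ⟨g - s • (g - m), fun x hx => lt_of_pow_lt_pow_left₀ 2 dist_nonneg ?_⟩
  have hexpand := norm_add_sq_real (x - g) (s • (g - m))
  rw [real_inner_smul_right] at hexpand
  have hinner : ⟪x - g, g - m⟫ ≤ -‖g - m‖ ^ 2 := by
    have := hmin x hx
    rw [← sub_add_sub_cancel x g m, inner_add_right, real_inner_self_eq_norm_sq,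
      real_inner_comm] at this
    linarith
  have hxg : ‖x - g‖ ^ 2 ≤ B ^ 2 :=
    pow_le_pow_left₀ (norm_nonneg _) (mem_closedBall_iff_norm.1 (hB hx)) 2
  have hs0 : 0 ≤ s := by positivity
  rw [dist_eq_norm, dist_eq_norm, ← sub_add, sub_sub_cancel, hexpand]
  nlinarith [mul_le_mul_of_nonneg_left hinner hs0]

lemma exists_ne_zero_inner_eq_zero (hE : 1 < Module.finrank ℝ E) (v : E) :
    ∃ w : E, w ≠ 0 ∧ ⟪w, v⟫ = 0 := by
  have hspan : Submodule.span ℝ {v} ≠ ⊤ := fun h => by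
    have := finrank_span_le_card (R := ℝ) ({v} : Set E)
    rw [h, finrank_top, toFinset_singleton, Finset.card_singleton] at this
    exact this.not_gt hE
  obtain ⟨w, hw, hw0⟩ := Submodule.exists_mem_ne_zero_of_ne_bot
    (mt (Submodule.orthogonal_eq_bot_iff (K := Submodule.span ℝ {v})).1 hspan)
  exact ⟨w, hw0, Submodule.mem_orthogonal_singleton_iff_inner_left.1 hw⟩

lemma dist_sq_le_of_dist_le {x e c : E} (h : dist x c ≤ dist e c) :
    dist x e ^ 2 ≤ -2 * ⟪x - e, e - c⟫ := by
  have hexpand := norm_add_sq_real (x - e) (e - c)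
  rw [sub_add_sub_cancel, ← dist_eq_norm, ← dist_eq_norm, ← dist_eq_norm] at hexpand
  linarith [pow_le_pow_left₀ dist_nonneg h 2]

/- The chords perpendicular to `e - c` close to a farthest point `e` are short. -/
lemma exists_chord_near_farthest_point (hE : 1 < Module.finrank ℝ E)
    {G : Set E} (hG : IsOpen G) (hb : IsBounded G) {c e : E} (he : e ∈ closure G)
    (hmax : ∀ x ∈ closure G, dist x c ≤ dist e c) {δ : ℝ} (hδ : 0 < δ) :
    ∃ a ∈ closure G \ G, ∃ b ∈ closure G \ G, a ≠ b ∧ openSegment ℝ a b ⊆ G ∧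
      dist a e < δ ∧ dist b e < δ := by
  obtain ⟨d, hd, hdn⟩ := exists_ne_zero_inner_eq_zero hE (e - c)
  obtain ⟨y, hyU, hyG⟩ := mem_closure_iff.1 he {x | -2 * ⟪x - e, e - c⟫ < δ ^ 2}
    (isOpen_lt (by fun_prop) continuous_const) (by simpa using pow_pos hδ 2)
  have hclose (t : ℝ) (ht : y + t • d ∈ closure G) : dist (y + t • d) e < δ := by
    have hquad := dist_sq_le_of_dist_le (hmax _ ht)
    rw [add_sub_right_comm, inner_add_left, real_inner_smul_left, hdn, mul_zero, add_zero] at hquad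
    exact lt_of_pow_lt_pow_left₀ 2 hδ.le (hquad.trans_lt hyU)
  obtain ⟨s, t, hst, hs, ht, hseg⟩ := exists_openSegment_subset_of_isBounded hG hb hyG hd
  have hcl : segment ℝ (y + s • d) (y + t • d) ⊆ closure G :=
    closure_openSegment (𝕜 := ℝ) (y + s • d) (y + t • d) ▸ closure_mono hseg
  have hs' := hcl (left_mem_segment ℝ _ _)
  have ht' := hcl (right_mem_segment ℝ _ _)
  refine ⟨_, ⟨hs', hs⟩, _, ⟨ht', ht⟩, fun h => hst.ne ?_, hseg, hclose s hs', hclose t ht'⟩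
  exact smul_left_injective ℝ hd (add_left_cancel h)

lemma exists_chord_of_isBounded_connectedComponentIn (hE : 1 < Module.finrank ℝ E)
    {S₁ S₂ K : Set E} (hS₁ : IsClosed S₁) (hS₂ : IsClosed S₂) (hK : IsCompact K)
    (hconv : Convex ℝ K) (hint : interior K = ∅) (hinter : S₁ ∩ S₂ ⊆ K) {z : E} (hz : z ∉ S₁ ∪ S₂)
    (hb : IsBounded (connectedComponentIn (S₁ ∪ S₂)ᶜ z)) :
    ∃ a b, a ≠ b ∧ openSegment ℝ a b ⊆ connectedComponentIn (S₁ ∪ S₂)ᶜ z ∧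
      ((a ∈ S₁ ∧ b ∈ S₁) ∨ (a ∈ S₂ ∧ b ∈ S₂)) := by
  have := Module.finite_of_finrank_pos (zero_lt_one.trans hE)
  set G := connectedComponentIn (S₁ ∪ S₂)ᶜ z
  have hG : IsOpen G := (hS₁.union hS₂).isOpen_compl.connectedComponentIn
  have hzG : z ∈ G := mem_connectedComponentIn hz
  obtain ⟨g, hgG, hgK⟩ : ∃ g ∈ G, g ∉ K := by
    by_contra! h
    exact notMem_empty z (hint ▸ interior_maximal h hG hzG)
  obtain ⟨c, hc⟩ := exists_forall_dist_lt_of_notMem_convex hK hconv hgK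
  obtain ⟨e, he, hmax⟩ := hb.isCompact_closure.exists_isMaxOn ⟨g, subset_closure hgG⟩
    (f := fun x => dist x c) (by fun_prop)
  have heK : e ∉ K := fun h => (hc e h).not_ge (hmax (subset_closure hgG))
  have hchord {S T : Set E} (hT : IsClosed T) (heT : e ∉ T) (hST : closure G \ G ⊆ S ∪ T) :
      ∃ a b, a ≠ b ∧ openSegment ℝ a b ⊆ G ∧ a ∈ S ∧ b ∈ S := by
    obtain ⟨δ, hδ, hball⟩ := Metric.isOpen_iff.1 hT.isOpen_compl e heT
    obtain ⟨a, ha, b, hb, hab, hseg, hae, hbe⟩ := exists_chord_near_farthest_point hE hG hb he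
      (fun x hx => hmax hx) hδ
    exact ⟨a, b, hab, hseg, (hST ha).resolve_right (hball hae),
      (hST hb).resolve_right (hball hbe)⟩
  have hfr : closure G \ G ⊆ S₁ ∪ S₂ := fun x hx =>
    (closure_connectedComponentIn_compl_subset (hS₁.union hS₂) z hx.1).resolve_left hx.2
  by_cases he₂ : e ∈ S₂
  · obtain ⟨a, b, hab, hseg, h⟩ := hchord hS₁ (fun he₁ => heK (hinter ⟨he₁, he₂⟩))
      (union_comm S₁ S₂ ▸ hfr)
    exact ⟨a, b, hab, hseg, .inr h⟩
  · obtain ⟨a, b, hab, hseg, h⟩ := hchord hS₂ he₂ hfr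
    exact ⟨a, b, hab, hseg, .inl h⟩

end Chords

section Sublinear

variable {E : Type*}

/-- A sublinear function, that is, a subadditive and positively homogeneous one: an asymmetric
seminorm, possibly with negative values. -/
structure IsSublinear [AddCommGroup E] [Module ℝ E] (h : E → ℝ) : Prop where
  add_le : ∀ x y, h (x + y) ≤ h x + h y
  smul : ∀ c : ℝ, 0 ≤ c → ∀ x, h (c • x) = c * h x

namespace IsSublinear

section Module

variable [AddCommGroup E] [Module ℝ E] {h : E → ℝ}

lemma of_convexOn (hconv : ConvexOn ℝ univ h)
    (hsmul : ∀ c : ℝ, 0 ≤ c → ∀ x, h (c • x) = c * h x) : IsSublinear h where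
  smul := hsmul
  add_le x y := by
    have hmid := hconv.2 (mem_univ x) (mem_univ y) (by norm_num : (0 : ℝ) ≤ 1 / 2)
      (by norm_num : (0 : ℝ) ≤ 1 / 2) (by norm_num)
    rw [← smul_add, hsmul _ (by norm_num), smul_eq_mul, smul_eq_mul] at hmid
    linarith

lemma zero (hh : IsSublinear h) : h 0 = 0 := by
  simpa using hh.smul 0 le_rfl 0

lemma convexOn (hh : IsSublinear h) : ConvexOn ℝ univ h :=
  ⟨convex_univ, fun x _ y _ a b ha hb _ => (hh.add_le _ _).trans_eq <| by
    rw [hh.smul a ha, hh.smul b hb, smul_eq_mul, smul_eq_mul]⟩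

lemma comp_neg (hh : IsSublinear h) : IsSublinear fun x => h (-x) where
  add_le x y := by rw [neg_add]; exact hh.add_le _ _
  smul c hc x := by rw [← smul_neg]; exact hh.smul c hc _

lemma sub_linear (hh : IsSublinear h) (g : E →ₗ[ℝ] ℝ) : IsSublinear fun x => h x - g x where
  add_le x y := by linarith [hh.add_le x y, g.map_add x y]
  smul c hc x := by rw [hh.smul c hc, g.map_smul, smul_eq_mul, mul_sub]

lemma mul_le (hh : IsSublinear h) (c : ℝ) (x : E) : c * h x ≤ h (c • x) := by
  rcases le_total 0 c with hc | hc
  · exact (hh.smul c hc x).ge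
  · have hsum := hh.add_le (c • x) (-c • x)
    rw [← add_smul, add_neg_cancel, zero_smul, hh.zero, hh.smul _ (neg_nonneg.2 hc)] at hsum
    linarith

lemma exists_linear_le (hh : IsSublinear h) (v : E) :
    ∃ g : E →ₗ[ℝ] ℝ, (∀ x, g x ≤ h x) ∧ g v = h v := by
  have hwell (c : ℝ) (hc : c • v = 0) : c • h v = 0 := by
    rcases smul_eq_zero.1 hc with rfl | rfl
    · exact zero_smul ℝ _
    · rw [hh.zero, smul_zero]
  obtain ⟨g, hgv, hg⟩ := exists_extension_of_le_sublinear
    (LinearPMap.mkSpanSingleton' v (h v) hwell) h (fun c hc => hh.smul c hc.le) hh.add_le (by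
      rintro ⟨x, hx⟩
      obtain ⟨c, rfl⟩ := Submodule.mem_span_singleton.1 hx
      rw [LinearPMap.mkSpanSingleton'_apply, smul_eq_mul]
      exact hh.mul_le c v)
  exact ⟨g, hg, (hgv ⟨v, Submodule.mem_span_singleton_self v⟩).trans
    (LinearPMap.mkSpanSingleton'_apply_self _ _ _ _)⟩

end Module

lemma continuous [NormedAddCommGroup E] [NormedSpace ℝ E] [FiniteDimensional ℝ E] {h : E → ℝ}
    (hh : IsSublinear h) : Continuous h :=
  continuousOn_univ.1 (hh.convexOn.continuousOn isOpen_univ)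

end IsSublinear

variable [NormedAddCommGroup E] [NormedSpace ℝ E] {N : E → ℝ}

/-- A sublinear function which is coercive and additive only on pairs of vectors of the same
direction. For the length that it defines, segments are the only shortest curves. -/
structure IsStrictGauge (N : E → ℝ) : Prop extends IsSublinear N where
  exists_le : ∃ ε > 0, ∀ x, ε * ‖x‖ ≤ N x
  sameRay : ∀ x y, N x + N y ≤ N (x + y) → SameRay ℝ x y

namespace IsStrictGauge

lemma nonneg (hN : IsStrictGauge N) (x : E) : 0 ≤ N x := by
  obtain ⟨ε, hε, h⟩ := hN.exists_le
  exact le_trans (by positivity) (h x)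

lemma eq_zero_of_le (hN : IsStrictGauge N) {x : E} (hx : N x ≤ 0) : x = 0 := by
  obtain ⟨ε, hε, h⟩ := hN.exists_le
  exact norm_le_zero_iff.1 (nonpos_of_mul_nonpos_right ((h x).trans hx) hε)

lemma apply_sub_le (hN : IsStrictGauge N) {c : ℝ → E} {ψ : ℝ → ℝ} {S : Set ℝ}
    (hle : ∀ s ∈ S, ∀ t ∈ S, s ≤ t → N (c t - c s) ≤ ψ t - ψ s) {s t : ℝ} (hs : s ∈ S) (ht : t ∈ S)
    (hst : ψ s ≤ ψ t) : N (c t - c s) ≤ ψ t - ψ s := by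
  rcases le_total s t with h | h
  · exact hle s hs t ht h
  · rw [← neg_sub, hN.eq_zero_of_le ((hle t ht s hs h).trans (sub_nonpos.2 hst)), neg_zero, hN.zero]
    exact sub_nonneg.2 hst

end IsStrictGauge

lemma IsSublinear.isStrictGauge_add_norm [StrictConvexSpace ℝ E] {h : E → ℝ} (hh : IsSublinear h)
    (hnonneg : ∀ x, 0 ≤ h x) {ε : ℝ} (hε : 0 < ε) : IsStrictGauge fun x => h x + ε * ‖x‖ where
  add_le x y := by
    linarith [hh.add_le x y, mul_le_mul_of_nonneg_left (norm_add_le x y) hε.le]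
  smul c hc x := by rw [hh.smul c hc, norm_smul, Real.norm_of_nonneg hc]; ring
  exists_le := ⟨ε, hε, fun x => le_add_of_nonneg_left (hnonneg x)⟩
  sameRay x y hxy := by
    refine sameRay_iff_norm_add.2 ((norm_add_le x y).antisymm ?_)
    refine le_of_mul_le_mul_left ?_ hε
    linarith [hh.add_le x y]

lemma isStrictGauge_norm [StrictConvexSpace ℝ E] : IsStrictGauge fun x : E => ‖x‖ where
  add_le := norm_add_le
  smul c hc x := by rw [norm_smul, Real.norm_of_nonneg hc]
  exists_le := ⟨1, one_pos, fun x => (one_mul _).le⟩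
  sameRay x y hxy := sameRay_iff_norm_add.2 ((norm_add_le x y).antisymm hxy)

end Sublinear

section Minimizing

variable {E : Type*} [NormedAddCommGroup E] [NormedSpace ℝ E]

/-- `γ`, restricted to `[0, 1]`, is a curve in `R` from `P` to `Q` along which `N` grows at rate at
most `ℓ`. Up to reparametrization these are the curves of `N`-length at most `ℓ`. -/
structure IsAdmissible (N : E → ℝ) (R : Set E) (P Q : E) (ℓ : ℝ) (γ : ℝ → E) : Prop where
  apply_zero : γ 0 = P
  apply_one : γ 1 = Q
  mem : ∀ t, γ t ∈ R
  le : ∀ s t, s ≤ t → N (γ t - γ s) ≤ ℓ * (t - s)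

/-- `γ` is a curve in `R` from `P` to `Q` of constant speed and of the smallest possible `N`-length,
namely `ℓ`. -/
structure IsMinimizing (N : E → ℝ) (R : Set E) (P Q : E) (ℓ : ℝ) (γ : ℝ → E) : Prop
    extends IsAdmissible N R P Q ℓ γ where
  min : ∀ ℓ' γ', IsAdmissible N R P Q ℓ' γ' → ℓ ≤ ℓ'

variable {N : E → ℝ} {R : Set E} {P Q : E} {ℓ : ℝ} {γ : ℝ → E}

/- Reparametrize `c` by the values of `ψ`. -/
lemma IsStrictGauge.exists_isAdmissible (hN : IsStrictGauge N) {c : ℝ → E} {ψ : ℝ → ℝ}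
    (h0 : c 0 = P) (h1 : c 1 = Q) (hc : ∀ t ∈ Icc (0 : ℝ) 1, c t ∈ R)
    (hψ : ContinuousOn ψ (Icc 0 1))
    (hle : ∀ s ∈ Icc (0 : ℝ) 1, ∀ t ∈ Icc (0 : ℝ) 1, s ≤ t → N (c t - c s) ≤ ψ t - ψ s) :
    ∃ γ, IsAdmissible N R P Q (ψ 1 - ψ 0) γ := by
  have h0mem : (0 : ℝ) ∈ Icc (0 : ℝ) 1 := left_mem_Icc.2 zero_le_one
  have h1mem : (1 : ℝ) ∈ Icc (0 : ℝ) 1 := right_mem_Icc.2 zero_le_one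
  have hψ01 : 0 ≤ ψ 1 - ψ 0 := (hN.nonneg _).trans (hle 0 h0mem 1 h1mem zero_le_one)
  have hinv : ∀ x ∈ Icc (0 : ℝ) 1, ∃ y ∈ Icc (0 : ℝ) 1, ψ y = ψ 0 + x * (ψ 1 - ψ 0) := fun x hx =>
    intermediate_value_Icc zero_le_one hψ ⟨by nlinarith [hx.1], by nlinarith [hx.2]⟩
  choose! g hg hψg using hinv
  let π (t : ℝ) : ℝ := projIcc 0 1 zero_le_one t
  have hπ (t : ℝ) : π t ∈ Icc (0 : ℝ) 1 := (projIcc 0 1 zero_le_one t).2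
  have hπ0 : π 0 = 0 := congrArg Subtype.val (projIcc_left zero_le_one)
  have hπ1 : π 1 = 1 := congrArg Subtype.val (projIcc_right zero_le_one)
  have hψπ (t : ℝ) : ψ (g (π t)) = ψ 0 + π t * (ψ 1 - ψ 0) := hψg _ (hπ t)
  refine ⟨fun t => c (g (π t)), ?_, ?_, fun t => hc _ (hg _ (hπ t)), fun s t hst => ?_⟩
  · have := hN.apply_sub_le hle h0mem (hg _ (hπ 0)) (by rw [hψπ, hπ0]; linarith)
    rw [hψπ, hπ0, zero_mul, add_zero, sub_self] at this
    simp only [hπ0]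
    exact (sub_eq_zero.1 (hN.eq_zero_of_le this)).trans h0
  · have := hN.apply_sub_le hle (hg _ (hπ 1)) h1mem (by rw [hψπ, hπ1]; linarith)
    rw [hψπ, hπ1, one_mul, add_sub_cancel, sub_self] at this
    simp only [hπ1]
    exact (sub_eq_zero.1 (hN.eq_zero_of_le this)).symm.trans h1
  · have hmono : π s ≤ π t := monotone_projIcc zero_le_one hst
    have hlip : π t - π s ≤ t - s := by
      have := abs_projIcc_sub_projIcc (c := t) (d := s) (zero_le_one' ℝ)
      exact (le_abs_self _).trans (this.trans_eq (abs_of_nonneg (sub_nonneg.2 hst)))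
    calc N (c (g (π t)) - c (g (π s))) ≤ ψ (g (π t)) - ψ (g (π s)) :=
          hN.apply_sub_le hle (hg _ (hπ s)) (hg _ (hπ t)) (by
            rw [hψπ, hψπ]; linarith [mul_le_mul_of_nonneg_right hmono hψ01])
      _ = (ψ 1 - ψ 0) * (π t - π s) := by rw [hψπ, hψπ]; ring
      _ ≤ (ψ 1 - ψ 0) * (t - s) := mul_le_mul_of_nonneg_left hlip hψ01

lemma exists_continuous_monotone_eq_zero_eq_one {u v : ℝ} (huv : u < v) :
    ∃ θ : ℝ → ℝ, Continuous θ ∧ Monotone θ ∧ (∀ t ≤ u, θ t = 0) ∧ ∀ t, v ≤ t → θ t = 1 := by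
  have hvu : 0 < v - u := sub_pos.2 huv
  refine ⟨fun t => (max u (min v t) - u) / (v - u), by fun_prop, fun s t hst => ?_,
    fun t ht => ?_, fun t ht => ?_⟩
  · simp only
    gcongr
  · simp only [min_eq_right (ht.trans huv.le), max_eq_left ht, sub_self, zero_div]
  · simp only [min_eq_left ht, max_eq_right huv.le, div_self hvu.ne']

namespace IsAdmissible

lemma nonneg (hN : IsStrictGauge N) (h : IsAdmissible N R P Q ℓ γ) : 0 ≤ ℓ := by
  simpa using (hN.nonneg _).trans (h.le 0 1 zero_le_one)

lemma pos (hN : IsStrictGauge N) (h : IsAdmissible N R P Q ℓ γ) (hPQ : P ≠ Q) : 0 < ℓ := by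
  refine (h.nonneg hN).lt_of_ne fun hℓ => hPQ ?_
  have := h.le 0 1 zero_le_one
  rw [← hℓ, zero_mul, h.apply_zero, h.apply_one] at this
  exact (sub_eq_zero.1 (hN.eq_zero_of_le this)).symm

lemma exists_lipschitzWith (hN : IsStrictGauge N) (h : IsAdmissible N R P Q ℓ γ) :
    ∃ K, LipschitzWith K γ := by
  obtain ⟨ε, hε, hle⟩ := hN.exists_le
  have key (s t : ℝ) (hst : s ≤ t) : dist (γ s) (γ t) ≤ ℓ / ε * dist s t := by
    rw [dist_comm, dist_eq_norm, dist_comm, Real.dist_eq, abs_of_nonneg (sub_nonneg.2 hst),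
      div_mul_eq_mul_div, le_div_iff₀' hε]
    exact (hle _).trans (h.le s t hst)
  refine ⟨⟨ℓ / ε, div_nonneg (h.nonneg hN) hε.le⟩, LipschitzWith.of_dist_le_mul fun s t => ?_⟩
  rcases le_total s t with hst | hst
  · exact key s t hst
  · rw [dist_comm, dist_comm s]
    exact key t s hst

lemma continuous (hN : IsStrictGauge N) (h : IsAdmissible N R P Q ℓ γ) : Continuous γ :=
  (h.exists_lipschitzWith hN).choose_spec.continuous

/- The curve which replaces the arc `γ '' [u, v]` by a segment is written as a sum of three curves,
each of which is constant while the others move. -/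
lemma exists_shortcut (hN : IsStrictGauge N) (h : IsAdmissible N R P Q ℓ γ) {u v : ℝ} (hu : 0 ≤ u)
    (huv : u < v) (hv : v ≤ 1) (hseg : segment ℝ (γ u) (γ v) ⊆ R) :
    ∃ γ', IsAdmissible N R P Q (ℓ * (u + (1 - v)) + N (γ v - γ u)) γ' := by
  obtain ⟨θ, hθc, hθmono, hθu, hθv⟩ := exists_continuous_monotone_eq_zero_eq_one huv
  have hθ (t : ℝ) : θ t ∈ Icc (0 : ℝ) 1 :=
    ⟨hθu _ (min_le_right t u) ▸ hθmono (min_le_left t u),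
      hθv _ (le_max_right t v) ▸ hθmono (le_max_left t v)⟩
  let c (t : ℝ) : E := γ (min t u) + θ t • (γ v - γ u) + (γ (max t v) - γ v)
  let ψ (t : ℝ) : ℝ := ℓ * min t u + θ t * N (γ v - γ u) + ℓ * max t v
  have hcu {t : ℝ} (ht : t ≤ u) : c t = γ t := by
    simp only [c, hθu t ht, min_eq_left ht, max_eq_right (ht.trans huv.le)]
    module
  have hcv {t : ℝ} (ht : v ≤ t) : c t = γ t := by
    simp only [c, hθv t ht, min_eq_right (huv.le.trans ht), max_eq_left ht]
    module
  have hmem (t : ℝ) : c t ∈ R := by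
    rcases le_total t u with htu | htu
    · exact hcu htu ▸ h.mem t
    rcases le_total v t with htv | htv
    · exact hcv htv ▸ h.mem t
    refine hseg ?_
    rw [segment_eq_image']
    refine ⟨θ t, hθ t, ?_⟩
    simp only [c, min_eq_right htu, max_eq_right htv, sub_self, add_zero]
  have hle (s t : ℝ) (hst : s ≤ t) : N (c t - c s) ≤ ψ t - ψ s := by
    have hsum : c t - c s = (γ (min t u) - γ (min s u)) + (θ t - θ s) • (γ v - γ u) +
        (γ (max t v) - γ (max s v)) := by
      simp only [c]
      module
    have h1 := h.le _ _ (min_le_min_right u hst)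
    have h2 := hN.smul (θ t - θ s) (sub_nonneg.2 (hθmono hst)) (γ v - γ u)
    have h3 := h.le _ _ (max_le_max_right v hst)
    rw [hsum]
    refine (hN.add_le _ _).trans ((add_le_add_left (hN.add_le _ _) _).trans ?_)
    simp only [ψ]
    linarith
  obtain ⟨γ', hγ'⟩ := hN.exists_isAdmissible (ψ := ψ) ((hcu hu).trans h.apply_zero)
    ((hcv hv).trans h.apply_one) (fun t _ => hmem t) (by fun_prop) (fun s _ t _ => hle s t)
  refine ⟨γ', ?_⟩
  convert hγ' using 1
  simp only [ψ, hθu 0 hu, hθv 1 hv, min_eq_left hu, min_eq_right (huv.le.trans hv), max_eq_left hv,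
    max_eq_right (hu.trans huv.le)]
  ring

lemma exists_isMinimizing [FiniteDimensional ℝ E] (hN : IsStrictGauge N) (hR : IsCompact R)
    (h : IsAdmissible N R P Q ℓ γ) : ∃ ℓ' γ', IsMinimizing N R P Q ℓ' γ' := by
  have hclosed : IsClosed {x : ℝ × (ℝ → E) | IsAdmissible N R P Q x.1 x.2} := by
    have hset : {x : ℝ × (ℝ → E) | IsAdmissible N R P Q x.1 x.2} =
        {x | x.2 0 = P} ∩ {x | x.2 1 = Q} ∩ (⋂ t, {x | x.2 t ∈ R}) ∩
          ⋂ (s) (t) (_ : s ≤ t), {x | N (x.2 t - x.2 s) ≤ x.1 * (t - s)} := by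
      ext x
      simp only [mem_inter_iff, mem_iInter, mem_ofPred_eq]
      exact ⟨fun h => ⟨⟨⟨h.1, h.2⟩, h.3⟩, h.4⟩, fun h => ⟨h.1.1.1, h.1.1.2, h.1.2, h.2⟩⟩
    have hev (t : ℝ) : Continuous fun x : ℝ × (ℝ → E) => x.2 t := by fun_prop
    have hNc := hN.continuous
    rw [hset]
    refine (((isClosed_eq (hev 0) continuous_const).inter
      (isClosed_eq (hev 1) continuous_const)).inter
        (isClosed_iInter fun t => hR.isClosed.preimage (hev t))).inter ?_
    exact isClosed_iInter fun s => isClosed_iInter fun t => isClosed_iInter fun _ =>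
      isClosed_le (hNc.comp ((hev t).sub (hev s))) (by fun_prop)
  have hcompact : IsCompact ({x : ℝ × (ℝ → E) | IsAdmissible N R P Q x.1 x.2} ∩
      Icc 0 ℓ ×ˢ univ.pi fun _ => R) :=
    (isCompact_Icc.prod (isCompact_univ_pi fun _ => hR)).inter_left hclosed
  obtain ⟨x, hx, hmin⟩ := hcompact.exists_isMinOn
    ⟨(ℓ, γ), h, ⟨h.nonneg hN, le_rfl⟩, fun t _ => h.mem t⟩ continuous_fst.continuousOn
  refine ⟨x.1, x.2, hx.1, fun ℓ' γ' h' => ?_⟩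
  rcases le_total ℓ' ℓ with hℓ | hℓ
  · exact hmin (a := (ℓ', γ')) ⟨h', ⟨h'.nonneg hN, hℓ⟩, fun t _ => h'.mem t⟩
  · exact hx.2.1.2.trans hℓ

end IsAdmissible

namespace IsMinimizing

lemma le_of_segment_subset (hN : IsStrictGauge N) (h : IsMinimizing N R P Q ℓ γ) {u v : ℝ}
    (hu : 0 ≤ u) (huv : u < v) (hv : v ≤ 1) (hseg : segment ℝ (γ u) (γ v) ⊆ R) :
    ℓ * (v - u) ≤ N (γ v - γ u) := by
  obtain ⟨γ', h'⟩ := h.exists_shortcut hN hu huv hv hseg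
  linarith [h.min _ _ h']

lemma injOn (hN : IsStrictGauge N) (h : IsMinimizing N R P Q ℓ γ) (hPQ : P ≠ Q) :
    InjOn γ (Icc 0 1) := by
  have hne (u v : ℝ) (hu : 0 ≤ u) (huv : u < v) (hv : v ≤ 1) : γ u ≠ γ v := fun he => by
    have := h.le_of_segment_subset hN hu huv hv (by
      rw [he, segment_same]
      exact singleton_subset_iff.2 (h.mem v))
    rw [he, sub_self, hN.zero] at this
    exact this.not_gt (mul_pos (h.pos hN hPQ) (sub_pos.2 huv))
  intro u hu v hv he
  rcases lt_trichotomy u v with huv | huv | huv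
  · exact (hne u v hu.1 huv hv.2 he).elim
  · exact huv
  · exact (hne v u hv.1 huv hu.2 he.symm).elim

lemma mem_openSegment (hN : IsStrictGauge N) (h : IsMinimizing N R P Q ℓ γ) (hPQ : P ≠ Q)
    {u v m : ℝ} (hu : 0 ≤ u) (hv : v ≤ 1) (hm : m ∈ Ioo u v)
    (hseg : segment ℝ (γ u) (γ v) ⊆ R) : γ m ∈ openSegment ℝ (γ u) (γ v) := by
  have huv : u < v := hm.1.trans hm.2
  have hray : SameRay ℝ (γ m - γ u) (γ v - γ m) := by
    refine hN.sameRay _ _ ?_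
    rw [← add_comm (γ v - γ m), sub_add_sub_cancel]
    linarith [h.le_of_segment_subset hN hu huv hv hseg, h.le u m hm.1.le, h.le m v hm.2.le]
  have hinj := h.injOn hN hPQ
  have hmI : m ∈ Icc (0 : ℝ) 1 := ⟨hu.trans hm.1.le, hm.2.le.trans hv⟩
  refine mem_openSegment_of_ne_left_right (fun he => hm.1.ne ?_) (fun he => hm.2.ne' ?_)
    (mem_segment_iff_sameRay.2 hray)
  · exact hinj ⟨hu, huv.le.trans hv⟩ hmI he
  · exact hinj ⟨hu.trans huv.le, hv⟩ hmI he

lemma not_openSegment_subset (hN : IsStrictGauge N) (h : IsMinimizing N R P Q ℓ γ) (hPQ : P ≠ Q)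
    {u v : ℝ} (hu : u ∈ Icc (0 : ℝ) 1) (hv : v ∈ Icc (0 : ℝ) 1) {a b : E}
    (ha : a ∈ γ '' uIcc u v) (hb : b ∈ γ '' uIcc u v) (hab : a ≠ b) {G : Set E} (hGR : G ⊆ R)
    (hG : Disjoint G (γ '' uIcc u v)) : ¬ openSegment ℝ a b ⊆ G := by
  obtain ⟨x, hx, rfl⟩ := ha
  obtain ⟨y, hy, rfl⟩ := hb
  wlog hxy : x < y generalizing x y
  · rw [openSegment_symm]
    exact this y hy x hx hab.symm
      ((not_lt.1 hxy).lt_of_ne fun he => hab (congrArg γ he.symm))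
  intro hseg
  have hsub : uIcc u v ⊆ Icc 0 1 := ordConnected_Icc.uIcc_subset hu hv
  have hsegR : segment ℝ (γ x) (γ y) ⊆ R := by
    rw [← insert_endpoints_openSegment]
    exact insert_subset (h.mem x) (insert_subset (h.mem y) (hseg.trans hGR))
  obtain ⟨m, hm⟩ := exists_between hxy
  have hmem := h.mem_openSegment hN hPQ (hsub hx).1 (hsub hy).2 hm hsegR
  exact hG.notMem_of_mem_left (hseg hmem)
    (mem_image_of_mem γ (ordConnected_uIcc.out hx hy ⟨hm.1.le, hm.2.le⟩))

end IsMinimizing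

end Minimizing

section Plane

lemma exists_isBounded_connectedComponentIn_of_arcs {E : Type*} [NormedAddCommGroup E]
    [NormedSpace ℝ E] (hE : Module.finrank ℝ E = 2) {σ ρ : ℝ → E} (hσ : Continuous σ)
    (hρ : Continuous ρ) {s s' t t' : ℝ} (hst : σ s = ρ t) (hst' : σ s' = ρ t') (hne : σ s ≠ σ s')
    (hinter : σ '' uIcc s s' ∩ ρ '' uIcc t t' ⊆ {σ s, σ s'}) :
    ∃ z ∉ σ '' uIcc s s' ∪ ρ '' uIcc t t',
      IsBounded (connectedComponentIn (σ '' uIcc s s' ∪ ρ '' uIcc t t')ᶜ z) := by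
  let p : Path (σ s) (σ s') := (Path.segment s s').map hσ
  let q : Path (σ s) (σ s') := ((Path.segment t t').map hρ).cast hst hst'
  have hp : range p = σ '' uIcc s s' := by
    rw [← segment_eq_uIcc, ← Path.range_segment, ← range_comp]
    rfl
  have hq : range q = ρ '' uIcc t t' := by
    rw [← segment_eq_uIcc, ← Path.range_segment, ← range_comp]
    rfl
  rw [← hp, ← hq] at hinter ⊢
  exact exists_isBounded_connectedComponentIn_of_inter_subset hE hne p q hinter

variable {E : Type*} [NormedAddCommGroup E] [InnerProductSpace ℝ E] {N₁ N₂ : E → ℝ} {R : Set E}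
  {P Q : E} {ℓ₁ ℓ₂ : ℝ} {σ ρ : ℝ → E}

lemma IsMinimizing.not_image_inter_image_subset (hE : Module.finrank ℝ E = 2) (hR : IsHoleFree R)
    (hPQ : P ≠ Q) (hN₁ : IsStrictGauge N₁) (hN₂ : IsStrictGauge N₂)
    (hσ : IsMinimizing N₁ R P Q ℓ₁ σ) (hρ : IsMinimizing N₂ R P Q ℓ₂ ρ) {s s' t t' : ℝ}
    (hs : s ∈ Icc (0 : ℝ) 1) (hs' : s' ∈ Icc (0 : ℝ) 1) (ht : t ∈ Icc (0 : ℝ) 1)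
    (ht' : t' ∈ Icc (0 : ℝ) 1) (hst : σ s = ρ t) (hst' : σ s' = ρ t') (hss' : s ≠ s') :
    ¬ σ '' uIcc s s' ∩ ρ '' uIcc t t' ⊆ {σ s, σ s'} := by
  intro hinter
  have hσc := hσ.continuous hN₁
  have hρc := hρ.continuous hN₂
  obtain ⟨z, hz, hb⟩ := exists_isBounded_connectedComponentIn_of_arcs hE hσc hρc hst hst'
    (fun h => hss' (hσ.injOn hN₁ hPQ hs hs' h)) hinter
  set S := σ '' uIcc s s' ∪ ρ '' uIcc t t'
  have hE' : 1 < Module.finrank ℝ E := hE ▸ one_lt_two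
  have hK : IsCompact (segment ℝ (σ s) (σ s')) := by
    rw [← convexHull_pair]
    exact (toFinite _).isCompact_convexHull ℝ
  obtain ⟨a, b, hab, hseg, hends⟩ := exists_chord_of_isBounded_connectedComponentIn hE'
    (isCompact_uIcc.image hσc).isClosed (isCompact_uIcc.image hρc).isClosed
    hK (convex_segment _ _) (interior_segment_eq_empty hE' _ _)
    (hinter.trans (pair_subset (left_mem_segment ℝ _ _) (right_mem_segment ℝ _ _))) hz hb
  have hGR : connectedComponentIn Sᶜ z ⊆ R := hR.connectedComponentIn_subset
    (union_subset (image_subset_iff.2 fun x _ => hσ.mem x)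
      (image_subset_iff.2 fun x _ => hρ.mem x)) hb
  have hG : Disjoint (connectedComponentIn Sᶜ z) S :=
    disjoint_left.2 fun x hx => connectedComponentIn_subset Sᶜ z hx
  rcases hends with ⟨ha, hb⟩ | ⟨ha, hb⟩
  · exact hσ.not_openSegment_subset hN₁ hPQ hs hs' ha hb hab hGR
      (hG.mono_right subset_union_left) hseg
  · exact hρ.not_openSegment_subset hN₂ hPQ ht ht' ha hb hab hGR
      (hG.mono_right subset_union_right) hseg

lemma IsMinimizing.image_subset (hE : Module.finrank ℝ E = 2) (hR : IsHoleFree R)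
    (hPQ : P ≠ Q) (hN₁ : IsStrictGauge N₁) (hN₂ : IsStrictGauge N₂)
    (hσ : IsMinimizing N₁ R P Q ℓ₁ σ) (hρ : IsMinimizing N₂ R P Q ℓ₂ ρ) :
    σ '' Icc 0 1 ⊆ ρ '' Icc 0 1 := by
  rintro _ ⟨x, hx, rfl⟩
  by_contra hxρ
  have hclosed : IsClosed (ρ '' Icc 0 1) := (isCompact_Icc.image (hρ.continuous hN₂)).isClosed
  have h0 : σ 0 ∈ ρ '' Icc 0 1 :=
    ⟨0, left_mem_Icc.2 zero_le_one, hρ.apply_zero.trans hσ.apply_zero.symm⟩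
  have h1 : σ 1 ∈ ρ '' Icc 0 1 :=
    ⟨1, right_mem_Icc.2 zero_le_one, hρ.apply_one.trans hσ.apply_one.symm⟩
  obtain ⟨s, ⟨t, ht, hst⟩, s', ⟨t', ht', hst'⟩, hs, hs', hmem, hgap⟩ :=
    exists_gap (hclosed.preimage (hσ.continuous hN₁)) h0 h1 hx hxρ
  have hss' : s < s' := hmem.1.trans hmem.2
  refine hσ.not_image_inter_image_subset hE hR hPQ hN₁ hN₂ hρ ⟨hs, hss'.le.trans hs'⟩
    ⟨hs.trans hss'.le, hs'⟩ ht ht' hst.symm hst'.symm hss'.ne ?_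
  rintro _ ⟨⟨y, hy, rfl⟩, hyρ⟩
  rw [uIcc_of_le hss'.le] at hy
  have hyC : σ y ∈ ρ '' Icc 0 1 := image_mono (ordConnected_Icc.uIcc_subset ht ht') hyρ
  rcases eq_endpoints_or_mem_Ioo_of_mem_Icc hy with rfl | rfl | hy
  · exact .inl rfl
  · exact .inr rfl
  · exact (hgap y hy hyC).elim

end Plane

section Length

lemma exists_monotone_comp_eqOn {X : Type*} [TopologicalSpace X] [T2Space X] {σ ρ : ℝ → X}
    (hσ : ContinuousOn σ (Icc 0 1)) (hσi : InjOn σ (Icc 0 1)) (hρ : ContinuousOn ρ (Icc 0 1))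
    (hρi : InjOn ρ (Icc 0 1)) (h0 : σ 0 = ρ 0) (h1 : σ 1 = ρ 1)
    (hsub : σ '' Icc 0 1 ⊆ ρ '' Icc 0 1) :
    ∃ θ : ℝ → ℝ, Monotone θ ∧ θ 0 = 0 ∧ θ 1 = 1 ∧ EqOn (ρ ∘ θ) σ (Icc 0 1) := by
  have hex (s : Icc (0 : ℝ) 1) : ∃ t : Icc (0 : ℝ) 1, ρ t = σ s := by
    obtain ⟨t, ht, hts⟩ := hsub ⟨s, s.2, rfl⟩
    exact ⟨⟨t, ht⟩, hts⟩
  choose θ hθ using hex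
  have hemb : Topology.IsClosedEmbedding ((Icc (0 : ℝ) 1).domRestrict ρ) :=
    hρ.domRestrict.isClosedEmbedding hρi.injective
  have hθc : Continuous θ :=
    hemb.isEmbedding.continuous_iff.2 (hσ.domRestrict.congr fun s => (hθ s).symm)
  have hθi : Function.Injective θ := fun s t hst =>
    hσi.injective (show σ s = σ t by rw [← hθ, ← hθ, hst])
  have hθ0 : θ 0 = 0 := hemb.injective ((hθ 0).trans h0)
  have hθ1 : θ 1 = 1 := hemb.injective ((hθ 1).trans h1)
  have hmono : StrictMono θ := hθc.strictMono_of_inj_boundedOrder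
    (show θ 0 ≤ θ 1 by rw [hθ0, hθ1]; exact zero_le_one) hθi
  refine ⟨fun s => θ (projIcc 0 1 zero_le_one s),
    fun s t hst => hmono.monotone (monotone_projIcc _ hst), ?_, ?_, fun s hs => ?_⟩
  · simp only [projIcc_left]
    exact congrArg Subtype.val hθ0
  · simp only [projIcc_right]
    exact congrArg Subtype.val hθ1
  · simp only [Function.comp_apply, hθ, projIcc_of_mem _ hs]

variable {E : Type*} [NormedAddCommGroup E] [NormedSpace ℝ E] [FiniteDimensional ℝ E] {h : E → ℝ}
  {c : ℝ → E} {K : ℝ≥0}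

lemma intervalIntegrable_comp_deriv (hc : LipschitzWith K c) (hh : Continuous h) (a b : ℝ) :
    IntervalIntegrable (fun t => h (deriv c t)) volume a b := by
  have := FiniteDimensional.proper ℝ E
  obtain ⟨C, hC⟩ := (isCompact_closedBall (0 : E) K).exists_bound_of_continuousOn hh.continuousOn
  refine (intervalIntegrable_const (c := C)).mono_fun
    (hh.comp_aestronglyMeasurable (aestronglyMeasurable_deriv c _)) (.of_forall fun t => ?_)
  exact (hC _ (mem_closedBall_zero_iff.2 (norm_deriv_le_of_lipschitz hc))).trans (le_abs_self C)

lemma integral_linearMap_comp_deriv (hc : LipschitzWith K c) (g : E →ₗ[ℝ] ℝ) (a b : ℝ) :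
    ∫ t in a..b, g (deriv c t) = g (c b - c a) := by
  let G : E →L[ℝ] ℝ := LinearMap.toContinuousLinearMap g
  have hGc : LipschitzWith (‖G‖₊ * K) (G ∘ c) := G.lipschitz.comp hc
  have hftc := (hGc.lipschitzOnWith (s := uIcc a b)).absolutelyContinuousOnInterval
  rw [map_sub]
  refine Eq.trans (intervalIntegral.integral_congr_ae ?_) hftc.integral_deriv_eq_sub
  filter_upwards [hc.ae_differentiableAt_real] with t ht _
  exact (G.hasFDerivAt.comp_hasDerivAt t ht.hasDerivAt).deriv.symm

namespace IsSublinear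

lemma apply_deriv_le (hh : IsSublinear h) {ψ : ℝ → ℝ} {t : ℝ} (hc : DifferentiableAt ℝ c t)
    (hψ : DifferentiableAt ℝ ψ t)
    (hle : ∀ᶠ k in 𝓝[>] 0, h (c (t + k) - c t) ≤ ψ (t + k) - ψ t) :
    h (deriv c t) ≤ deriv ψ t := by
  have hlim := (hh.continuous.tendsto _).comp hc.hasDerivAt.tendsto_slope_zero_right
  refine le_of_tendsto_of_tendsto hlim hψ.hasDerivAt.tendsto_slope_zero_right ?_
  filter_upwards [hle, self_mem_nhdsWithin] with k hk hk0
  have hk0' : 0 ≤ k⁻¹ := inv_nonneg.2 (mem_Ioi.1 hk0).le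
  rw [Function.comp_apply, hh.smul _ hk0', smul_eq_mul]
  exact mul_le_mul_of_nonneg_left hk hk0'

lemma integral_comp_deriv_le (hh : IsSublinear h) (hc : LipschitzWith K c) {ψ : ℝ → ℝ}
    (hψ : Monotone ψ) {a b : ℝ} (hab : a ≤ b)
    (hle : ∀ s ∈ Icc a b, ∀ t ∈ Icc a b, s ≤ t → h (c t - c s) ≤ ψ t - ψ s) :
    ∫ t in a..b, h (deriv c t) ≤ ψ b - ψ a := by
  have hψ' : MonotoneOn ψ (uIcc a b) := hψ.monotoneOn _
  have hint : ∫ t in a..b, deriv ψ t ≤ ψ b - ψ a := by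
    have := hψ'.intervalIntegral_deriv_mem_uIcc
    rw [uIcc_of_le (sub_nonneg.2 (hψ hab))] at this
    exact this.2
  refine (intervalIntegral.integral_mono_ae_restrict hab
    (intervalIntegrable_comp_deriv hc hh.continuous a b) hψ'.intervalIntegrable_deriv ?_).trans hint
  rw [← Measure.restrict_congr_set Ioo_ae_eq_Icc]
  filter_upwards [ae_restrict_mem measurableSet_Ioo, ae_restrict_of_ae hc.ae_differentiableAt_real,
    ae_restrict_of_ae hψ.ae_differentiableAt] with t ht hct hψt
  refine hh.apply_deriv_le hct hψt ?_
  filter_upwards [Ioo_mem_nhdsGT (sub_pos.2 ht.2)] with k hk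
  exact hle t ⟨ht.1.le, ht.2.le⟩ (t + k) ⟨by linarith [ht.1, hk.1], by linarith [hk.2]⟩
    (by linarith [hk.1])

lemma le_integral_comp_deriv (hh : IsSublinear h) (hc : LipschitzWith K c) {a b : ℝ}
    (hab : a ≤ b) : h (c b - c a) ≤ ∫ t in a..b, h (deriv c t) := by
  obtain ⟨g, hg, hgv⟩ := hh.exists_linear_le (c b - c a)
  rw [← hgv, ← integral_linearMap_comp_deriv hc g a b]
  exact intervalIntegral.integral_mono_on hab
    (intervalIntegrable_comp_deriv hc g.continuous_of_finiteDimensional a b)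
    (intervalIntegrable_comp_deriv hc hh.continuous a b) fun t _ => hg _

end IsSublinear

lemma IsStrictGauge.exists_isAdmissible_of_lipschitzWith {N : E → ℝ} (hN : IsStrictGauge N)
    {R : Set E} (hc : LipschitzWith K c) (hcR : ∀ t ∈ Icc (0 : ℝ) 1, c t ∈ R) :
    ∃ γ, IsAdmissible N R (c 0) (c 1) (∫ t in (0 : ℝ)..1, N (deriv c t)) γ := by
  have hint := intervalIntegrable_comp_deriv hc hN.continuous
  simpa using hN.exists_isAdmissible rfl rfl hcR
    (intervalIntegral.continuous_primitive hint 0).continuousOn fun s _ t _ hst => by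
      rw [intervalIntegral.integral_interval_sub_left (hint _ _) (hint _ _)]
      exact hN.le_integral_comp_deriv hc hst

end Length

section Comparison

variable {E : Type*} [NormedAddCommGroup E] [InnerProductSpace ℝ E] {N₁ N₂ h : E → ℝ} {R : Set E}
  {P Q : E} {ℓ ℓ₁ ℓ₂ : ℝ} {σ ρ c : ℝ → E} {K : ℝ≥0}

namespace IsMinimizing

lemma integral_comp_deriv_le_of_isMinimizing (hE : Module.finrank ℝ E = 2) (hR : IsHoleFree R)
    (hPQ : P ≠ Q) (hN₁ : IsStrictGauge N₁) (hN₂ : IsStrictGauge N₂)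
    (hσ : IsMinimizing N₁ R P Q ℓ₁ σ) (hρ : IsMinimizing N₂ R P Q ℓ₂ ρ) :
    ∫ t in (0 : ℝ)..1, N₂ (deriv σ t) ≤ ℓ₂ := by
  have := Module.finite_of_finrank_pos (hE ▸ two_pos)
  obtain ⟨θ, hθ, hθ0, hθ1, hρθ⟩ := exists_monotone_comp_eqOn (hσ.continuous hN₁).continuousOn
    (hσ.injOn hN₁ hPQ) (hρ.continuous hN₂).continuousOn (hρ.injOn hN₂ hPQ)
    (hσ.apply_zero.trans hρ.apply_zero.symm) (hσ.apply_one.trans hρ.apply_one.symm)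
    (hσ.image_subset hE hR hPQ hN₁ hN₂ hρ)
  obtain ⟨K, hK⟩ := hσ.exists_lipschitzWith hN₁
  have hmono : Monotone fun t => ℓ₂ * θ t := hθ.const_mul (hρ.nonneg hN₂)
  have := hN₂.integral_comp_deriv_le hK hmono zero_le_one fun s hs t ht hst => by
    rw [← hρθ hs, ← hρθ ht, ← mul_sub]
    exact hρ.le _ _ (hθ hst)
  simpa [hθ0, hθ1] using this

lemma integral_comp_deriv_le_of_isStrictGauge (hE : Module.finrank ℝ E = 2) (hRc : IsCompact R)
    (hR : IsHoleFree R) (hPQ : P ≠ Q) (hN₁ : IsStrictGauge N₁) (hN₂ : IsStrictGauge N₂)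
    (hσ : IsMinimizing N₁ R P Q ℓ σ) (hc : LipschitzWith K c) (hc0 : c 0 = P) (hc1 : c 1 = Q)
    (hcR : ∀ t ∈ Icc (0 : ℝ) 1, c t ∈ R) :
    ∫ t in (0 : ℝ)..1, N₂ (deriv σ t) ≤ ∫ t in (0 : ℝ)..1, N₂ (deriv c t) := by
  have := Module.finite_of_finrank_pos (hE ▸ two_pos)
  obtain ⟨γ, hγ⟩ := hN₂.exists_isAdmissible_of_lipschitzWith hc hcR
  rw [hc0, hc1] at hγ
  obtain ⟨ℓ', ρ, hρ⟩ := hγ.exists_isMinimizing hN₂ hRc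
  exact (hσ.integral_comp_deriv_le_of_isMinimizing hE hR hPQ hN₁ hN₂ hρ).trans (hρ.min _ _ hγ)

lemma integral_comp_deriv_le_of_nonneg (hE : Module.finrank ℝ E = 2) (hRc : IsCompact R)
    (hR : IsHoleFree R) (hPQ : P ≠ Q) (hN : IsStrictGauge N₁) (hσ : IsMinimizing N₁ R P Q ℓ σ)
    (hh : IsSublinear h) (hnonneg : ∀ x, 0 ≤ h x) (hc : LipschitzWith K c) (hc0 : c 0 = P)
    (hc1 : c 1 = Q) (hcR : ∀ t ∈ Icc (0 : ℝ) 1, c t ∈ R) :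
    ∫ t in (0 : ℝ)..1, h (deriv σ t) ≤ ∫ t in (0 : ℝ)..1, h (deriv c t) := by
  have := Module.finite_of_finrank_pos (hE ▸ two_pos)
  obtain ⟨K', hσK⟩ := hσ.exists_lipschitzWith hN
  set M := ∫ t in (0 : ℝ)..1, ‖deriv c t‖
  have key (ε : ℝ) (hε : 0 < ε) :
      ∫ t in (0 : ℝ)..1, h (deriv σ t) ≤ (∫ t in (0 : ℝ)..1, h (deriv c t)) + ε * M := by
    have hg := hh.isStrictGauge_add_norm hnonneg hε
    calc ∫ t in (0 : ℝ)..1, h (deriv σ t)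
        ≤ ∫ t in (0 : ℝ)..1, (h (deriv σ t) + ε * ‖deriv σ t‖) :=
          intervalIntegral.integral_mono_on zero_le_one
            (intervalIntegrable_comp_deriv hσK hh.continuous 0 1)
            (intervalIntegrable_comp_deriv hσK hg.continuous 0 1)
            fun t _ => le_add_of_nonneg_right (by positivity)
      _ ≤ ∫ t in (0 : ℝ)..1, (h (deriv c t) + ε * ‖deriv c t‖) :=
          hσ.integral_comp_deriv_le_of_isStrictGauge hE hRc hR hPQ hN hg hc hc0 hc1 hcR
      _ = (∫ t in (0 : ℝ)..1, h (deriv c t)) + ε * M := by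
          rw [intervalIntegral.integral_add (intervalIntegrable_comp_deriv hc hh.continuous 0 1)
            ((intervalIntegrable_comp_deriv hc continuous_norm 0 1).const_mul ε),
            intervalIntegral.integral_const_mul]
  have hlim : Filter.Tendsto (fun ε => (∫ t in (0 : ℝ)..1, h (deriv c t)) + ε * M) (𝓝[>] 0)
      (𝓝 (∫ t in (0 : ℝ)..1, h (deriv c t))) :=
    (Continuous.tendsto' (by fun_prop) _ _ (by simp)).mono_left nhdsWithin_le_nhds
  refine ge_of_tendsto hlim ?_
  filter_upwards [self_mem_nhdsWithin] with ε hε using key ε hε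

lemma integral_comp_deriv_le (hE : Module.finrank ℝ E = 2) (hRc : IsCompact R)
    (hR : IsHoleFree R) (hPQ : P ≠ Q) (hN : IsStrictGauge N₁) (hσ : IsMinimizing N₁ R P Q ℓ σ)
    (hh : IsSublinear h) (hc : LipschitzWith K c) (hc0 : c 0 = P) (hc1 : c 1 = Q)
    (hcR : ∀ t ∈ Icc (0 : ℝ) 1, c t ∈ R) :
    ∫ t in (0 : ℝ)..1, h (deriv σ t) ≤ ∫ t in (0 : ℝ)..1, h (deriv c t) := by
  have := Module.finite_of_finrank_pos (hE ▸ two_pos)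
  obtain ⟨K', hσK⟩ := hσ.exists_lipschitzWith hN
  obtain ⟨g, hg, -⟩ := hh.exists_linear_le 0
  have hsub {γ : ℝ → E} {L : ℝ≥0} (hγ : LipschitzWith L γ) (hγ0 : γ 0 = P) (hγ1 : γ 1 = Q) :
      ∫ t in (0 : ℝ)..1, (h (deriv γ t) - g (deriv γ t)) =
        (∫ t in (0 : ℝ)..1, h (deriv γ t)) - g (Q - P) := by
    rw [intervalIntegral.integral_sub (intervalIntegrable_comp_deriv hγ hh.continuous 0 1)
      (intervalIntegrable_comp_deriv hγ g.continuous_of_finiteDimensional 0 1),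
      integral_linearMap_comp_deriv hγ, hγ0, hγ1]
  have hle := hσ.integral_comp_deriv_le_of_nonneg hE hRc hR hPQ hN (hh.sub_linear g)
    (fun x => sub_nonneg.2 (hg x)) hc hc0 hc1 hcR
  rw [hsub hσK hσ.apply_zero hσ.apply_one, hsub hc hc0 hc1] at hle
  exact (sub_le_sub_iff_right _).1 hle

end IsMinimizing

theorem exists_forall_integral_comp_deriv_le (hE : Module.finrank ℝ E = 2)
    (hRc : IsCompact R) (hR : IsHoleFree R) (hPQ : P ≠ Q) {c₀ : ℝ → E} {K₀ : ℝ≥0}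
    (hc₀ : LipschitzWith K₀ c₀) (h0 : c₀ 0 = P) (h1 : c₀ 1 = Q)
    (hc₀R : ∀ t ∈ Icc (0 : ℝ) 1, c₀ t ∈ R) :
    ∃ τ K, LipschitzWith K τ ∧ InjOn τ (Icc 0 1) ∧ τ 0 = P ∧ τ 1 = Q ∧ (∀ t, τ t ∈ R) ∧
      ∀ h c K', IsSublinear h → LipschitzWith K' c → c 0 = P → c 1 = Q →
        (∀ t ∈ Icc (0 : ℝ) 1, c t ∈ R) →
        ∫ t in (0 : ℝ)..1, h (deriv τ t) ≤ ∫ t in (0 : ℝ)..1, h (deriv c t) := by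
  have := Module.finite_of_finrank_pos (hE ▸ two_pos)
  have hN : IsStrictGauge fun x : E => ‖x‖ := isStrictGauge_norm
  obtain ⟨γ, hγ⟩ := hN.exists_isAdmissible_of_lipschitzWith hc₀ hc₀R
  rw [h0, h1] at hγ
  obtain ⟨ℓ, τ, hτ⟩ := hγ.exists_isMinimizing hN hRc
  obtain ⟨K, hK⟩ := hτ.exists_lipschitzWith hN
  exact ⟨τ, K, hK, hτ.injOn hN hPQ, hτ.apply_zero, hτ.apply_one, hτ.mem,
    fun h c K' hh hc hc0 hc1 hcR => hτ.integral_comp_deriv_le hE hRc hR hPQ hN hh hc hc0 hc1 hcR⟩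

end Comparison

lemma integral_comp_deriv_reverse {E : Type*} [NormedAddCommGroup E] [NormedSpace ℝ E] (h : E → ℝ)
    (c : ℝ → E) : ∫ t in (0 : ℝ)..1, h (deriv (fun s => c (1 - s)) t) =
      ∫ t in (0 : ℝ)..1, h (-deriv c t) := by
  simp only [deriv_comp_const_sub]
  simpa using intervalIntegral.integral_comp_sub_left (a := 0) (b := 1) (fun t => h (-deriv c t)) 1

theorem statement_1_general {E : Type*} [NormedAddCommGroup E] [InnerProductSpace ℝ E]
    (hE : Module.finrank ℝ E = 2) (τ₁ τ₂ : ℝ → E) (K₁ K₂ : ℝ≥0) (hτ₁ : LipschitzWith K₁ τ₁)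
    (hτ₂ : LipschitzWith K₂ τ₂) (P Q : E) (hPQ : P ≠ Q) (hP₁ : τ₁ 0 = P) (hP₂ : τ₂ 1 = P)
    (hQ₁ : τ₁ 1 = Q) (hQ₂ : τ₂ 0 = Q) :
    ∃ (τ : ℝ → E) (K : ℝ≥0), LipschitzWith K τ ∧ InjOn τ (Icc 0 1) ∧ τ 0 = P ∧ τ 1 = Q ∧
      (∀ t ∈ Icc (0 : ℝ) 1, τ t ∈ enclosedRegion (τ₁ '' Icc 0 1 ∪ τ₂ '' Icc 0 1)) ∧
      ∀ 𝔥 : E → ℝ, ConvexOn ℝ univ 𝔥 → (∀ c : ℝ, 0 ≤ c → ∀ v, 𝔥 (c • v) = c * 𝔥 v) →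
        (∫ t in (0 : ℝ)..1, 𝔥 (deriv τ t)) + (∫ t in (0 : ℝ)..1, 𝔥 (deriv (fun s => τ (1 - s)) t))
          ≤ (∫ t in (0 : ℝ)..1, 𝔥 (deriv τ₁ t)) + ∫ t in (0 : ℝ)..1, 𝔥 (deriv τ₂ t) := by
  have := Module.finite_of_finrank_pos (hE ▸ two_pos)
  set S := τ₁ '' Icc 0 1 ∪ τ₂ '' Icc 0 1
  have hS : IsCompact S :=
    (isCompact_Icc.image hτ₁.continuous).union (isCompact_Icc.image hτ₂.continuous)
  have hR : IsCompact (enclosedRegion S) := isCompact_of_isClosed_isBounded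
    (isClosed_enclosedRegion hS.isClosed) (isBounded_enclosedRegion hS.isBounded)
  have hmem₁ (t) (ht : t ∈ Icc (0 : ℝ) 1) : τ₁ t ∈ enclosedRegion S :=
    subset_enclosedRegion S (.inl (mem_image_of_mem τ₁ ht))
  have hmem₂ (t) (ht : t ∈ Icc (0 : ℝ) 1) : τ₂ (1 - t) ∈ enclosedRegion S :=
    subset_enclosedRegion S (.inr (mem_image_of_mem τ₂ (Icc.mem_iff_one_sub_mem.1 ht)))
  obtain ⟨τ, K, hτ, hinj, h0, h1, hmem, hmin⟩ := exists_forall_integral_comp_deriv_le hE hR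
    (isHoleFree_enclosedRegion S) hPQ hτ₁ hP₁ hQ₁ hmem₁
  refine ⟨τ, K, hτ, hinj, h0, h1, fun t _ => hmem t, fun 𝔥 hconv hsmul => ?_⟩
  have h𝔥 := IsSublinear.of_convexOn hconv hsmul
  refine add_le_add (hmin 𝔥 τ₁ K₁ h𝔥 hτ₁ hP₁ hQ₁ hmem₁) ?_
  have hτ₂' : LipschitzWith K₂ fun t => τ₂ (1 - t) := LipschitzWith.of_dist_le_mul fun s t => by
    simpa only [dist_sub_left] using hτ₂.dist_le_mul (1 - s) (1 - t)
  have hle := hmin _ _ K₂ h𝔥.comp_neg hτ₂' (by simpa using hP₂) (by simpa using hQ₂) hmem₂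
  rw [← integral_comp_deriv_reverse, ← integral_comp_deriv_reverse] at hle
  simpa only [sub_sub_cancel] using hle

/-- Given a nonnegative, convex, positively 1-homogeneous
`𝔥 : ℝ² → ℝ`, and two injective Lipschitz paths `τ₁, τ₂ : [0,1] → ℝ²` from `P` to `Q`
and from `Q` to `P` respectively, having no intersection except `P` and `Q`,
there exists an injective Lipschitz path `τ` from `P` to `Q`, entirely contained in the
closed region `R` enclosed by `τ₁ ∪ τ₂` (the complement of the unbounded connected
component of the complement of the union of the two paths), such that
`len τ + len τ̂ ≤ len τ₁ + len τ₂`, where `τ̂ t = τ (1 - t)`. -/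
theorem statement_1 (𝔥 : EuclideanSpace ℝ (Fin 2) → ℝ)
    (h_nonneg : ∀ v, 0 ≤ 𝔥 v)
    (h_convex : ConvexOn ℝ Set.univ 𝔥)
    (h_homog : ∀ c : ℝ, 0 ≤ c → ∀ v, 𝔥 (c • v) = c * 𝔥 v)
    (τ₁ τ₂ : ℝ → EuclideanSpace ℝ (Fin 2)) (K₁ K₂ : NNReal)
    (hτ₁ : LipschitzWith K₁ τ₁) (hτ₂ : LipschitzWith K₂ τ₂)
    (hinj₁ : Set.InjOn τ₁ (Set.Icc 0 1)) (hinj₂ : Set.InjOn τ₂ (Set.Icc 0 1))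
    (P Q : EuclideanSpace ℝ (Fin 2)) (hPQ : P ≠ Q)
    (hP₁ : τ₁ 0 = P) (hP₂ : τ₂ 1 = P) (hQ₁ : τ₁ 1 = Q) (hQ₂ : τ₂ 0 = Q)
    (hint : ∀ s ∈ Set.Icc (0:ℝ) 1, ∀ t ∈ Set.Icc (0:ℝ) 1,
      τ₁ s = τ₂ t → (s = 0 ∧ t = 1) ∨ (s = 1 ∧ t = 0)) :
    -- `R` is the closed region enclosed by `τ₁ ∪ τ₂`: the complement of the unbounded
    -- connected component of the complement of the union of the two paths.
    ∃ (τ : ℝ → EuclideanSpace ℝ (Fin 2)) (K : NNReal),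
      LipschitzWith K τ ∧ Set.InjOn τ (Set.Icc 0 1) ∧
      τ 0 = P ∧ τ 1 = Q ∧
      (∀ t ∈ Set.Icc (0:ℝ) 1,
        τ t ∈ {x : EuclideanSpace ℝ (Fin 2) |
          x ∈ τ₁ '' Set.Icc 0 1 ∪ τ₂ '' Set.Icc 0 1 ∨
          Bornology.IsBounded
            (connectedComponentIn (τ₁ '' Set.Icc 0 1 ∪ τ₂ '' Set.Icc 0 1)ᶜ x)}) ∧
      (∫ t in (0:ℝ)..1, 𝔥 (deriv τ t)) +
          (∫ t in (0:ℝ)..1, 𝔥 (deriv (fun s => τ (1 - s)) t))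
        ≤ (∫ t in (0:ℝ)..1, 𝔥 (deriv τ₁ t)) + (∫ t in (0:ℝ)..1, 𝔥 (deriv τ₂ t)) := by
  obtain ⟨τ, K, hτ, hinj, h0, h1, hmem, hle⟩ := statement_1_general finrank_euclideanSpace_fin
    τ₁ τ₂ K₁ K₂ hτ₁ hτ₂ P Q hPQ hP₁ hP₂ hQ₁ hQ₂
  exact ⟨τ, K, hτ, hinj, h0, h1, hmem, hle 𝔥 h_convex h_homog⟩
end

section
/- There exist a function 𝔥 : ℝ² → ℝ which is continuous, positively 1-homogeneous, positive away from 0, continuously differentiable on ℝ² \ {0} and whose unit ball {𝔥 ≤ 1} is strictly convex, together with points A, B, C, B', C' all lying on the unit sphere {v : 𝔥(v) = 1}, such that the unordered pairs {B, C} and {B', C'} are different and both ∇𝔥(A) + ∇𝔥(B) + ∇𝔥(C) = 0 and ∇𝔥(A) + ∇𝔥(B') + ∇𝔥(C') = 0 hold. In particular, for a non-symmetric density a given direction A may belong to more than one admissible triple. -/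
/-!
The gradients of the support function `v ↦ ‖v‖ + ⟪p, v⟫` of the unit ball centred at `p` form the
unit sphere centred at `p`: at `v ≠ 0` the gradient is `v / ‖v‖ + p`. The gradients at opposite
directions `v` and `-v` therefore sum to `2p`, whatever `v` is. When `‖p‖ = 1 / 3`, the gradient in
direction `-p` is `-3p + p = -2p`, so the point in direction `-p` forms an admissible triple with
every pair of points in opposite directions.
-/

section RadialProj

variable {E : Type*} [AddCommGroup E] [Module ℝ E] {f : E → ℝ} {v w : E}

/-- The radial projection of `v` onto the unit sphere `{f = 1}` of a positively 1-homogeneous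
function `f`; it lies on that sphere when `0 < f v`. -/
noncomputable def radialProj (f : E → ℝ) (v : E) : E := (f v)⁻¹ • v

lemma apply_radialProj (hf : ∀ c : ℝ, 0 ≤ c → ∀ v, f (c • v) = c * f v) (hv : 0 < f v) :
    f (radialProj f v) = 1 := by
  rw [radialProj, hf _ (inv_nonneg.mpr hv.le), inv_mul_cancel₀ hv.ne']

lemma radialProj_ne_of_linearIndependent (h : LinearIndependent ℝ ![v, w]) (hv : f v ≠ 0) :
    radialProj f v ≠ radialProj f w := by
  intro heq
  have hzero : (f v)⁻¹ • v + (-(f w)⁻¹) • w = 0 := by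
    rw [neg_smul, add_neg_eq_zero]
    exact heq
  exact inv_ne_zero hv (LinearIndependent.pair_iff.mp h _ _ hzero).1

lemma pair_radialProj_ne_of_linearIndependent (h : LinearIndependent ℝ ![v, w]) (hv : f v ≠ 0) :
    ({radialProj f v, radialProj f (-v)} : Set E) ≠ {radialProj f w, radialProj f (-w)} := by
  intro heq
  have hmem : radialProj f v ∈ ({radialProj f w, radialProj f (-w)} : Set E) :=
    heq ▸ Set.mem_insert _ _
  rcases hmem with hw | hw
  · exact radialProj_ne_of_linearIndependent h hv hw
  · exact radialProj_ne_of_linearIndependent (LinearIndependent.pair_neg_right_iff.mpr h) hv hw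

end RadialProj

lemma strictConvex_setOf_le_one {E : Type*} [AddCommGroup E] [Module ℝ E] [TopologicalSpace E]
    {f : E → ℝ} (hcont : Continuous f) (hsmul : ∀ c : ℝ, 0 ≤ c → ∀ v, f (c • v) = c * f v)
    (hadd : ∀ x y, ¬SameRay ℝ x y → f (x + y) < f x + f y) :
    StrictConvex ℝ {v | f v ≤ 1} := by
  intro x (hx : f x ≤ 1) y (hy : f y ≤ 1) hxy a b ha hb hab
  suffices hlt : f (a • x + b • y) < 1 from
    interior_maximal (fun v (hv : f v < 1) => hv.le) (isOpen_lt hcont continuous_const) hlt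
  by_cases hray : SameRay ℝ x y
  · obtain ⟨u, s, t, hs, ht, -, rfl, rfl⟩ := hray.exists_eq_smul
    have hst : s ≠ t := fun h => hxy (by rw [h])
    rw [hsmul s hs] at hx
    rw [hsmul t ht] at hy
    rw [smul_smul, smul_smul, ← add_smul, hsmul _ (by positivity)]
    rcases le_or_gt (f u) 0 with hu | hu
    · exact (mul_nonpos_of_nonneg_of_nonpos (by positivity) hu).trans_lt one_pos
    · have hne : s * f u ≠ t * f u := (mul_left_injective₀ hu.ne').ne hst
      rcases hne.lt_or_gt with h | h
      · nlinarith [h.trans_le hy]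
      · nlinarith [h.trans_le hx]
  · have hray' : ¬SameRay ℝ (a • x) (b • y) := fun h => hray <| by
      simpa only [inv_smul_smul₀ ha.ne', inv_smul_smul₀ hb.ne'] using
        (h.pos_smul_left (inv_pos.mpr ha)).pos_smul_right (inv_pos.mpr hb)
    calc f (a • x + b • y) < f (a • x) + f (b • y) := hadd _ _ hray'
      _ = a * f x + b * f y := by rw [hsmul a ha.le, hsmul b hb.le]
      _ ≤ a * 1 + b * 1 := by gcongr
      _ = 1 := by rw [mul_one, mul_one, hab]

section NormAddInner

variable {E : Type*} [NormedAddCommGroup E] [InnerProductSpace ℝ E] {p v : E}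

/-- The support function `v ↦ ‖v‖ + ⟪p, v⟫` of the closed unit ball centred at `p`, a
non-symmetric density when `p ≠ 0`. -/
noncomputable def normAddInner (p v : E) : ℝ := ‖v‖ + inner ℝ p v

lemma continuous_normAddInner (p : E) : Continuous (normAddInner p) := by
  unfold normAddInner
  fun_prop

lemma normAddInner_smul (p : E) (c : ℝ) (hc : 0 ≤ c) (v : E) :
    normAddInner p (c • v) = c * normAddInner p v := by
  simp only [normAddInner, norm_smul, inner_smul_right, Real.norm_of_nonneg hc, mul_add]

lemma normAddInner_pos (hp : ‖p‖ < 1) (hv : v ≠ 0) : 0 < normAddInner p v := by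
  have hinner : -(‖p‖ * ‖v‖) ≤ inner ℝ p v := neg_le_of_abs_le (abs_real_inner_le_norm p v)
  have hnorm : ‖p‖ * ‖v‖ < ‖v‖ := mul_lt_of_lt_one_left (norm_pos_iff.mpr hv) hp
  unfold normAddInner
  linarith

lemma contDiffOn_normAddInner (p : E) {n : WithTop ℕ∞} :
    ContDiffOn ℝ n (normAddInner p) {0}ᶜ := fun _ hv =>
  ((contDiffAt_norm ℝ hv).add (contDiffAt_const.inner ℝ contDiffAt_id)).contDiffWithinAt

lemma normAddInner_add_lt (p : E) {x y : E} (h : ¬SameRay ℝ x y) :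
    normAddInner p (x + y) < normAddInner p x + normAddInner p y := by
  have hnorm : ‖x + y‖ < ‖x‖ + ‖y‖ := not_sameRay_iff_norm_add_lt.mp h
  simp only [normAddInner, inner_add_right]
  linarith

lemma strictConvex_normAddInner_le_one (p : E) : StrictConvex ℝ {v | normAddInner p v ≤ 1} :=
  strictConvex_setOf_le_one (continuous_normAddInner p) (normAddInner_smul p)
    fun _ _ => normAddInner_add_lt p

lemma normAddInner_radialProj (hp : ‖p‖ < 1) (hv : v ≠ 0) :
    normAddInner p (radialProj (normAddInner p) v) = 1 :=
  apply_radialProj (normAddInner_smul p) (normAddInner_pos hp hv)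

variable [CompleteSpace E]

lemma hasGradientAt_norm (hv : v ≠ 0) :
    HasGradientAt (fun w : E => ‖w‖) (NormedSpace.normalize v) v := by
  have hsqrt : HasFDerivAt (fun w : E => √(‖w‖ ^ 2)) _ v :=
    (hasStrictFDerivAt_norm_sq v).hasFDerivAt.sqrt (by simpa using hv)
  simp only [Real.sqrt_sq (norm_nonneg _)] at hsqrt
  rw [hasGradientAt_iff_hasFDerivAt]
  refine hsqrt.congr_fderiv ?_
  ext w
  simp only [one_div, mul_inv_rev, smul_apply, coe_innerSL_apply, nsmul_eq_mul, Nat.cast_ofNat,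
    smul_eq_mul, NormedSpace.normalize, map_smul, InnerProductSpace.toDual_apply_apply]
  field_simp

lemma hasGradientAt_normAddInner (p : E) (hv : v ≠ 0) :
    HasGradientAt (normAddInner p) (NormedSpace.normalize v + p) v := by
  rw [hasGradientAt_iff_hasFDerivAt, map_add]
  exact (hasGradientAt_norm hv).hasFDerivAt.add (innerSL ℝ p).hasFDerivAt

lemma gradient_normAddInner_radialProj (hp : ‖p‖ < 1) (hv : v ≠ 0) :
    gradient (normAddInner p) (radialProj (normAddInner p) v) = NormedSpace.normalize v + p := by
  have hc : 0 < (normAddInner p v)⁻¹ := inv_pos.mpr (normAddInner_pos hp hv)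
  rw [radialProj, (hasGradientAt_normAddInner p (smul_ne_zero hc.ne' hv)).gradient,
    NormedSpace.normalize_smul_of_pos hc]

lemma gradient_normAddInner_radialProj_add_add_eq_zero (hp : ‖p‖ = 1 / 3) (hv : v ≠ 0) :
    gradient (normAddInner p) (radialProj (normAddInner p) (-p)) +
      gradient (normAddInner p) (radialProj (normAddInner p) v) +
      gradient (normAddInner p) (radialProj (normAddInner p) (-v)) = 0 := by
  have hp1 : ‖p‖ < 1 := by rw [hp]; norm_num
  have hp0 : p ≠ 0 := norm_pos_iff.mp (by rw [hp]; norm_num)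
  have hnormalize : NormedSpace.normalize p = (3 : ℝ) • p := by
    rw [NormedSpace.normalize, hp]; norm_num
  simp only [gradient_normAddInner_radialProj hp1 (neg_ne_zero.mpr hp0),
    gradient_normAddInner_radialProj hp1 hv,
    gradient_normAddInner_radialProj hp1 (neg_ne_zero.mpr hv), NormedSpace.normalize_neg,
    hnormalize]
  module

end NormAddInner

theorem statement_8_general {E : Type*} [NormedAddCommGroup E] [InnerProductSpace ℝ E]
    [CompleteSpace E] (hE : 1 < Module.rank ℝ E) :
    ∃ (𝔥 : E → ℝ) (A B C B' C' : E),
      Continuous 𝔥 ∧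
      (∀ c : ℝ, 0 ≤ c → ∀ v, 𝔥 (c • v) = c * 𝔥 v) ∧
      (∀ v : E, v ≠ 0 → 0 < 𝔥 v) ∧
      ContDiffOn ℝ 1 𝔥 {(0 : E)}ᶜ ∧
      StrictConvex ℝ {v : E | 𝔥 v ≤ 1} ∧
      𝔥 A = 1 ∧ 𝔥 B = 1 ∧ 𝔥 C = 1 ∧ 𝔥 B' = 1 ∧ 𝔥 C' = 1 ∧
      ({B', C'} : Set E) ≠ {B, C} ∧
      gradient 𝔥 A + gradient 𝔥 B + gradient 𝔥 C = 0 ∧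
      gradient 𝔥 A + gradient 𝔥 B' + gradient 𝔥 C' = 0 := by
  have : Nontrivial E := rank_pos_iff_nontrivial.mp (zero_lt_one.trans hE)
  obtain ⟨p, hp⟩ : ∃ p : E, ‖p‖ = 1 / 3 := exists_norm_eq E (by norm_num)
  have hp1 : ‖p‖ < 1 := by rw [hp]; norm_num
  have hp0 : p ≠ 0 := norm_pos_iff.mp (by rw [hp]; norm_num)
  obtain ⟨v, hpv⟩ := exists_linearIndependent_pair_of_one_lt_rank hE hp0
  have hv0 : v ≠ 0 := hpv.ne_zero 1
  -- Using `p + v` rather than `p` keeps the second triple from repeating the point `A`.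
  have hind : LinearIndependent ℝ ![p + v, v] := LinearIndependent.pair_add_left_iff.mpr hpv
  have hw0 : p + v ≠ 0 := hind.ne_zero 0
  have hpairs := pair_radialProj_ne_of_linearIndependent hind (normAddInner_pos hp1 hw0).ne'
  have hsphere {u : E} (hu : u ≠ 0) := normAddInner_radialProj hp1 hu
  exact ⟨normAddInner p, radialProj _ (-p), radialProj _ v, radialProj _ (-v),
    radialProj _ (p + v), radialProj _ (-(p + v)), continuous_normAddInner p, normAddInner_smul p,
    fun _ => normAddInner_pos hp1, contDiffOn_normAddInner p, strictConvex_normAddInner_le_one p,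
    hsphere (neg_ne_zero.mpr hp0), hsphere hv0, hsphere (neg_ne_zero.mpr hv0), hsphere hw0,
    hsphere (neg_ne_zero.mpr hw0), hpairs,
    gradient_normAddInner_radialProj_add_add_eq_zero hp hv0,
    gradient_normAddInner_radialProj_add_add_eq_zero hp hw0⟩

/-- There exist a continuous, positively 1-homogeneous `𝔥 : ℝ² → ℝ`,
positive away from `0`, `C¹` on `ℝ² \ {0}`, with strictly convex unit ball `{𝔥 ≤ 1}`,
together with points `A, B, C, B', C'` on the unit sphere `{𝔥 = 1}`, such that the
unordered pairs `{B, C}` and `{B', C'}` differ and both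
`∇𝔥 A + ∇𝔥 B + ∇𝔥 C = 0` and `∇𝔥 A + ∇𝔥 B' + ∇𝔥 C' = 0` hold. -/
theorem statement_8 :
    ∃ (𝔥 : EuclideanSpace ℝ (Fin 2) → ℝ) (A B C B' C' : EuclideanSpace ℝ (Fin 2)),
      Continuous 𝔥 ∧
      (∀ c : ℝ, 0 ≤ c → ∀ v, 𝔥 (c • v) = c * 𝔥 v) ∧
      (∀ v : EuclideanSpace ℝ (Fin 2), v ≠ 0 → 0 < 𝔥 v) ∧
      ContDiffOn ℝ 1 𝔥 {(0 : EuclideanSpace ℝ (Fin 2))}ᶜ ∧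
      StrictConvex ℝ {v : EuclideanSpace ℝ (Fin 2) | 𝔥 v ≤ 1} ∧
      𝔥 A = 1 ∧ 𝔥 B = 1 ∧ 𝔥 C = 1 ∧ 𝔥 B' = 1 ∧ 𝔥 C' = 1 ∧
      ({B', C'} : Set (EuclideanSpace ℝ (Fin 2))) ≠ {B, C} ∧
      gradient 𝔥 A + gradient 𝔥 B + gradient 𝔥 C = 0 ∧
      gradient 𝔥 A + gradient 𝔥 B' + gradient 𝔥 C' = 0 :=
  statement_8_general (Module.lt_rank_of_lt_finrank (by simp))
end
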